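/- arXiv:0711.3159 — 3 statements merged into one kernel-verified Lean document; each statement's English description precedes it below -/
import Mathlib

section
/- There exists a strictly increasing sequence (r_n)_{n∈ℕ} of positive integers satisfying: (i) for all real numbers γ, δ with γ irrational or δ irrational, the sequence (r_n²·γ + r_n·δ) is uniformly distributed mod 1, i.e. for every nonzero integer m one has (1/N)·Σ_{n=1}^N e(m·(r_n²γ + r_nδ)) → 0 as N → ∞; (ii) for every d ∈ ℕ the set {n ∈ ℕ : d divides r_n} has positive natural density, i.e. the limit lim_{N→∞} |{n ≤ N : d divides r_n}|/N exists and is positive; and (iii) the set R = {r₁, r₂, …} is not a set of 2-recurrence, i.e. there exist a system (X,ℬ,μ,T) and A ∈ ℬ with μ(A) > 0 such that μ(A ∩ T^{-r}A ∩ T^{-2r}A) = 0 for every nonzero r ∈ R. -/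
open Filter MeasureTheory

/-- `e(x) = exp(2πix)`. -/
noncomputable def eFun (x : ℝ) : ℂ := Complex.exp (2 * Real.pi * Complex.I * x)

/-!
Write `⟨t⟩` for the integer nearest to `t`, let `1, α, β` be linearly independent over `ℤ`, and let
`R` be the set of `n` for which the bracket quadratic phase `β n (2⟨nα⟩ - nα)` is at distance at
least `1/4` from `0` modulo `1`. This phase is the second difference, along the progression
`0, n, 2n`, of the fibre coordinate of a skew product over a rotation of the torus by `(α, β)`, as
long as the base points stay in a small box. Hence no progression with step in `R` can stay in a
suitable small neighbourhood of the origin.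

On the other hand, nonzero multiples of the bracket phase have mean zero against every quadratic
phase `e(γn² + δn)`. By van der Corput's inequality it suffices to correlate with a shift by `h`;
since `⟨(n + h)α⟩ - ⟨nα⟩` is a bounded integer depending only on `nα` modulo `1`, the correlation is
a linear phase weighted by a piecewise continuous function of `nα`, and linear independence makes
its frequency lie outside `ℤ + ℤα` for all large `h`. So membership in `R` is independent of
quadratic phases: `R` has positive density, it inherits Weyl's theorem from `ℕ`, and, expanding
divisibility by `d` into additive characters, the proportion of multiples of `d` in `R` is `1/d`.
-/

open Finset Topology
open scoped ComplexConjugate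

/-! ### Cesàro means -/

/-- The average of the first `N` terms of a complex sequence, as a linear functional of the
sequence. It is `0` for `N = 0`. -/
noncomputable def cesaroMean (N : ℕ) : (ℕ → ℂ) →ₗ[ℂ] ℂ :=
  (N : ℂ)⁻¹ • ∑ n ∈ range N, LinearMap.proj n

/-- The sequence `u` has mean `L`: its averages over `0, …, N - 1` converge to `L`. -/
def HasMean (u : ℕ → ℂ) (L : ℂ) : Prop := Tendsto (fun N => cesaroMean N u) atTop (𝓝 L)

section CesaroMean

variable {u v : ℕ → ℂ} {L M : ℂ} {C : ℝ}

lemma cesaroMean_apply (N : ℕ) (u : ℕ → ℂ) :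
    cesaroMean N u = (N : ℂ)⁻¹ * ∑ n ∈ range N, u n := by
  simp [cesaroMean]

lemma cesaroMean_const {N : ℕ} (hN : N ≠ 0) (c : ℂ) : cesaroMean N (fun _ => c) = c := by
  rw [cesaroMean_apply, sum_const, card_range, nsmul_eq_mul,
    inv_mul_cancel_left₀ (by exact_mod_cast hN)]

lemma norm_cesaroMean_le_norm_ofReal {f : ℕ → ℝ} (h : ∀ n, ‖u n‖ ≤ f n) (N : ℕ) :
    ‖cesaroMean N u‖ ≤ ‖cesaroMean N fun n => (f n : ℂ)‖ := by
  have hf : 0 ≤ ∑ n ∈ range N, f n := sum_nonneg fun n _ => (norm_nonneg _).trans (h n)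
  rw [cesaroMean_apply, cesaroMean_apply, norm_mul, norm_mul, ← Complex.ofReal_sum,
    Complex.norm_of_nonneg hf]
  gcongr
  exact norm_sum_le_of_le _ fun n _ => h n

lemma norm_cesaroMean_le (hu : ∀ n, ‖u n‖ ≤ C) (N : ℕ) : ‖cesaroMean N u‖ ≤ C := by
  have hC : 0 ≤ C := (norm_nonneg _).trans (hu 0)
  refine (norm_cesaroMean_le_norm_ofReal hu N).trans ?_
  rcases eq_or_ne N 0 with rfl | hN
  · simpa [cesaroMean_apply] using hC
  · rw [cesaroMean_const hN, Complex.norm_of_nonneg hC]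

lemma cesaroMean_conj (N : ℕ) (u : ℕ → ℂ) :
    cesaroMean N (fun n => conj (u n)) = conj (cesaroMean N u) := by
  simp [cesaroMean_apply]

lemma norm_cesaroMean_sq_le (u : ℕ → ℂ) (N : ℕ) :
    ‖cesaroMean N u‖ ^ 2 ≤ ‖cesaroMean N fun n => u n * conj (u n)‖ := by
  have cauchy_schwarz : ‖∑ n ∈ range N, u n‖ ^ 2 ≤ N * ∑ n ∈ range N, ‖u n‖ ^ 2 := by
    calc ‖∑ n ∈ range N, u n‖ ^ 2 ≤ (∑ n ∈ range N, ‖u n‖) ^ 2 := by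
          gcongr; exact norm_sum_le _ _
      _ ≤ N * ∑ n ∈ range N, ‖u n‖ ^ 2 := by
          simpa using sq_sum_le_card_mul_sum_sq (s := range N) (f := fun n => ‖u n‖)
  have norm_sum : ‖∑ n ∈ range N, u n * conj (u n)‖ = ∑ n ∈ range N, ‖u n‖ ^ 2 := by
    simp_rw [Complex.mul_conj, Complex.normSq_eq_norm_sq, ← Complex.ofReal_sum]
    exact Complex.norm_of_nonneg (by positivity)
  rw [cesaroMean_apply, cesaroMean_apply, norm_mul, norm_mul, norm_inv, Complex.norm_natCast,
    norm_sum, mul_pow]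
  rcases eq_or_ne (N : ℝ) 0 with hN | hN
  · simp [hN]
  · calc (N : ℝ)⁻¹ ^ 2 * ‖∑ n ∈ range N, u n‖ ^ 2
        ≤ (N : ℝ)⁻¹ ^ 2 * (N * ∑ n ∈ range N, ‖u n‖ ^ 2) := by gcongr
      _ = (N : ℝ)⁻¹ * ∑ n ∈ range N, ‖u n‖ ^ 2 := by field_simp

lemma hasMean_const (c : ℂ) : HasMean (fun _ => c) c := by
  refine tendsto_const_nhds.congr' ?_
  filter_upwards [eventually_ne_atTop 0] with N hN using (cesaroMean_const hN c).symm

lemma HasMean.add (hu : HasMean u L) (hv : HasMean v M) :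
    HasMean (fun n => u n + v n) (L + M) :=
  (Tendsto.add hu hv).congr fun N => (map_add (cesaroMean N) u v).symm

lemma HasMean.const_mul (c : ℂ) (hu : HasMean u L) : HasMean (fun n => c * u n) (c * L) :=
  (Tendsto.const_mul c hu).congr fun N => (map_smul (cesaroMean N) c u).symm

lemma HasMean.conj (hu : HasMean u L) : HasMean (fun n => conj (u n)) (conj L) :=
  ((Complex.continuous_conj.tendsto L).comp hu).congr fun N => (cesaroMean_conj N u).symm

lemma hasMean_sum {ι : Type*} (s : Finset ι) {u : ι → ℕ → ℂ} {L : ι → ℂ}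
    (h : ∀ i ∈ s, HasMean (u i) (L i)) :
    HasMean (fun n => ∑ i ∈ s, u i n) (∑ i ∈ s, L i) := by
  refine (tendsto_finsetSum s h).congr fun N => ?_
  rw [← map_sum]
  congr 1
  ext n
  simp only [Finset.sum_apply]

lemma HasMean.sub (hu : HasMean u L) (hv : HasMean v M) :
    HasMean (fun n => u n - v n) (L - M) :=
  (Tendsto.sub hu hv).congr fun N => (map_sub (cesaroMean N) u v).symm

lemma hasMean_of_forall_approx
    (h : ∀ ε > 0, ∃ w M, HasMean w M ∧ ‖M - L‖ ≤ ε ∧ ∀ᶠ N in atTop, ‖cesaroMean N (u - w)‖ ≤ ε) :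
    HasMean u L := by
  refine Metric.tendsto_nhds.2 fun ε hε => ?_
  obtain ⟨w, M, hw, hML, huw⟩ := h (ε / 4) (by positivity)
  filter_upwards [huw, Metric.tendsto_nhds.1 hw (ε / 4) (by positivity)] with N hN hwN
  calc dist (cesaroMean N u) L
      = ‖cesaroMean N (u - w) + (cesaroMean N w - M) + (M - L)‖ := by
        rw [dist_eq_norm, map_sub]; congr 1; ring
    _ ≤ ‖cesaroMean N (u - w)‖ + ‖cesaroMean N w - M‖ + ‖M - L‖ := norm_add₃_le
    _ ≤ ε / 4 + ε / 4 + ε / 4 := by gcongr; exact (dist_eq_norm _ M).symm.trans_le hwN.le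
    _ < ε := by linarith

lemma hasMean_shift_sub (hu : ∀ n, ‖u n‖ ≤ C) (s : ℕ) :
    HasMean (fun n => u (n + s) - u n) 0 := by
  induction s with
  | zero => simpa using hasMean_const 0
  | succ s ih =>
    have step : HasMean (fun n => u (n + s + 1) - u (n + s)) 0 := by
      refine squeeze_zero_norm (a := fun N : ℕ => (N : ℝ)⁻¹ * (2 * C)) (fun N => ?_) ?_
      · have telescope := sum_range_sub (fun n => u (n + s)) N
        simp only [add_right_comm _ 1 s] at telescope
        rw [cesaroMean_apply, telescope, norm_mul, norm_inv, Complex.norm_natCast]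
        gcongr
        exact (norm_sub_le _ _).trans (by linarith [hu (N + s), hu (0 + s)])
      · simpa using tendsto_inv_atTop_nhds_zero_nat.mul_const (2 * C)
    simpa [add_assoc] using step.add ih

lemma hasMean_shift_iff (hu : ∀ n, ‖u n‖ ≤ C) (s : ℕ) :
    HasMean (fun n => u (n + s)) L ↔ HasMean u L := by
  have h := hasMean_shift_sub hu s
  exact ⟨fun hs => by simpa using hs.sub h, fun hu => by simpa using hu.add h⟩

/-- Shifting by `q` multiplies the mean by `w ≠ 1` but does not change it. -/
lemma hasMean_zero_of_ratio {q : ℕ} {w : ℂ} (hw : w ≠ 1) (hu : ∀ n, ‖u n‖ ≤ C)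
    (hq : ∀ n, u (n + q) = w * u n) : HasMean u 0 := by
  have h := (hasMean_shift_sub hu q).const_mul (w - 1)⁻¹
  have eq : u = fun n => (w - 1)⁻¹ * (u (n + q) - u n) := by
    ext n
    rw [hq, ← sub_one_mul, inv_mul_cancel_left₀ (sub_ne_zero.2 hw)]
  simpa [← eq] using h

end CesaroMean

/-! ### Van der Corput's inequality -/

section VanDerCorput

variable {u : ℕ → ℂ} {C : ℝ}

lemma eventually_norm_cesaroMean_sum_sq_le {ι : Type*} (s : Finset ι)
    {f : ι → ℕ → ℂ} (hf : ∀ i ∈ s, ∀ n, ‖f i n‖ ≤ C)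
    (horth : ∀ i ∈ s, ∀ j ∈ s, i ≠ j → HasMean (fun n => f i n * conj (f j n)) 0)
    {ε : ℝ} (hε : 0 < ε) :
    ∀ᶠ N in atTop, ‖cesaroMean N fun n => ∑ i ∈ s, f i n‖ ^ 2 ≤ #s * C ^ 2 + ε := by
  classical
  set a : ι → ι → ℕ → ℝ := fun i j N =>
    if i = j then C ^ 2 else ‖cesaroMean N fun n => f i n * conj (f j n)‖
  have bound (N : ℕ) :
      ‖cesaroMean N fun n => ∑ i ∈ s, f i n‖ ^ 2 ≤ ∑ i ∈ s, ∑ j ∈ s, a i j N := by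
    have expand : (fun n => (∑ i ∈ s, f i n) * conj (∑ j ∈ s, f j n)) =
        ∑ i ∈ s, ∑ j ∈ s, fun n => f i n * conj (f j n) := by
      ext n
      simp only [map_sum, sum_mul_sum, Finset.sum_apply]
    refine (norm_cesaroMean_sq_le _ N).trans ?_
    rw [expand]
    simp only [map_sum]
    refine norm_sum_le_of_le _ fun i hi => norm_sum_le_of_le _ fun j hj => ?_
    by_cases hij : i = j
    · subst hij
      simp only [a, if_true]
      refine norm_cesaroMean_le (fun n => ?_) N
      rw [norm_mul, RCLike.norm_conj, ← sq]
      have := hf i hi n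
      gcongr
    · simp only [a, if_neg hij, le_refl]
  have lim : Tendsto (fun N => ∑ i ∈ s, ∑ j ∈ s, a i j N) atTop (𝓝 (#s * C ^ 2)) := by
    have entry (i) (hi : i ∈ s) (j) (hj : j ∈ s) :
        Tendsto (a i j) atTop (𝓝 (if i = j then C ^ 2 else 0)) := by
      by_cases hij : i = j
      · simp only [a, if_pos hij, tendsto_const_nhds]
      · simpa only [a, if_neg hij, norm_zero] using (horth i hi j hj hij).norm
    convert tendsto_finsetSum s fun i hi => tendsto_finsetSum s fun j hj => entry i hi j hj
    simp
  filter_upwards [lim.eventually_le_const (lt_add_of_pos_right _ hε)] with N hN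
  exact (bound N).trans hN

lemma hasMean_mean_shifts_sub (hu : ∀ n, ‖u n‖ ≤ C) {J : ℕ} (hJ : J ≠ 0) (H : ℕ) :
    HasMean (fun n => (J : ℂ)⁻¹ * ∑ i ∈ range J, u (n + i * H) - u n) 0 := by
  have h := (hasMean_sum (range J) fun i _ => hasMean_shift_sub hu (i * H)).const_mul (J : ℂ)⁻¹
  simpa [mul_sub, hJ] using h

lemma hasMean_shift_mul_conj_shift (hu : ∀ n, ‖u n‖ ≤ C) {i j H : ℕ}
    (hcorr : ∀ h ≥ H, HasMean (fun n => u (n + h) * conj (u n)) 0) (hij : i ≠ j) :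
    HasMean (fun n => u (n + i * H) * conj (u (n + j * H))) 0 := by
  wlog hlt : j < i generalizing i j
  · have h := (this hij.symm (by omega)).conj
    simpa [mul_comm] using h
  have hle : H ≤ (i - j) * H := Nat.le_mul_of_pos_left H (by omega)
  have hbdd (n : ℕ) : ‖u (n + (i - j) * H) * conj (u n)‖ ≤ C * C := by
    rw [norm_mul, RCLike.norm_conj]
    exact mul_le_mul (hu _) (hu n) (norm_nonneg _) ((norm_nonneg _).trans (hu 0))
  have h := (hasMean_shift_iff hbdd (j * H)).2 (hcorr _ hle)
  have hidx (n : ℕ) : n + j * H + (i - j) * H = n + i * H := by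
    rw [add_assoc, ← add_mul, Nat.add_sub_cancel' hlt.le]
  simpa only [hidx] using h

theorem hasMean_zero_of_correlation (hu : ∀ n, ‖u n‖ ≤ C)
    (hcorr : ∀ᶠ h in atTop, HasMean (fun n => u (n + h) * conj (u n)) 0) : HasMean u 0 := by
  obtain ⟨H, hH⟩ := eventually_atTop.1 hcorr
  refine Metric.tendsto_nhds.2 fun ε hε => ?_
  obtain ⟨J, hJ⟩ := exists_nat_gt (C ^ 2 / (ε / 4) ^ 2)
  have hJ0 : (0 : ℝ) < J := (by positivity : (0 : ℝ) ≤ _).trans_lt hJ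
  have hJ0' : J ≠ 0 := by exact_mod_cast hJ0.ne'
  filter_upwards [Metric.tendsto_nhds.1 (hasMean_mean_shifts_sub hu hJ0' H) (ε / 2) (by positivity),
    eventually_norm_cesaroMean_sum_sq_le (range J) (f := fun i n => u (n + i * H))
      (fun i _ n => hu _) (fun i _ j _ hij => hasMean_shift_mul_conj_shift hu hH hij)
      (ε := (J * (ε / 4)) ^ 2) (by positivity)] with N hclose hsq
  set W := cesaroMean N fun n => ∑ i ∈ range J, u (n + i * H)
  have hW : ‖(J : ℂ)⁻¹ * W‖ ≤ ε / 2 := by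
    rw [div_lt_iff₀ (by positivity)] at hJ
    have : ‖W‖ ≤ J * (ε / 2) := by
      refine abs_le_of_sq_le_sq' (hsq.trans ?_) (by positivity) |>.2
      rw [card_range]
      nlinarith
    rwa [norm_mul, norm_inv, Complex.norm_natCast, inv_mul_le_iff₀ hJ0]
  have hsplit : cesaroMean N (fun n => (J : ℂ)⁻¹ * ∑ i ∈ range J, u (n + i * H) - u n) =
      (J : ℂ)⁻¹ * W - cesaroMean N u := by
    rw [← smul_eq_mul, ← map_smul, ← map_sub]
    rfl
  rw [hsplit, dist_zero_right, norm_sub_rev] at hclose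
  rw [dist_zero_right]
  linarith [norm_sub_norm_le (cesaroMean N u) ((J : ℂ)⁻¹ * W)]

end VanDerCorput

/-! ### Exponential sums of degree at most two -/

lemma eFun_add (x y : ℝ) : eFun (x + y) = eFun x * eFun y := by
  rw [eFun, eFun, eFun, ← Complex.exp_add]; push_cast; ring_nf

lemma eFun_eq_one_iff {x : ℝ} : eFun x = 1 ↔ ∃ m : ℤ, x = m := by
  rw [eFun, Complex.exp_eq_one_iff]
  refine exists_congr fun m => ?_
  rw [mul_comm, mul_left_inj' Complex.two_pi_I_ne_zero]
  norm_cast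

lemma eFun_intCast (m : ℤ) : eFun m = 1 := eFun_eq_one_iff.2 ⟨m, rfl⟩

lemma eFun_zero : eFun 0 = 1 := by simpa using eFun_intCast 0

lemma eFun_add_intCast (x : ℝ) (m : ℤ) : eFun (x + m) = eFun x := by
  rw [eFun_add, eFun_intCast, mul_one]

lemma norm_eFun (x : ℝ) : ‖eFun x‖ = 1 := by
  simp [eFun, Complex.norm_exp]

lemma eFun_neg (x : ℝ) : eFun (-x) = conj (eFun x) := by
  rw [eFun, eFun, ← Complex.exp_conj]; simp [map_ofNat]

lemma eFun_sub (x y : ℝ) : eFun (x - y) = eFun x * conj (eFun y) := by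
  rw [sub_eq_add_neg, eFun_add, eFun_neg]

lemma hasMean_eFun_linear {θ : ℝ} (hθ : ∀ m : ℤ, θ ≠ m) (c : ℝ) :
    HasMean (fun n => eFun (n * θ + c)) 0 := by
  refine hasMean_zero_of_ratio (q := 1) (w := eFun θ) (C := 1) (fun h => ?_)
    (fun n => (norm_eFun _).le) fun n => ?_
  · obtain ⟨m, hm⟩ := eFun_eq_one_iff.1 h
    exact hθ m hm
  · rw [← eFun_add]
    push_cast
    ring_nf

lemma hasMean_eFun_quadratic_of_irrational {γ : ℝ} (hγ : Irrational γ) (δ : ℝ) :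
    HasMean (fun n => eFun (γ * n ^ 2 + δ * n)) 0 := by
  refine hasMean_zero_of_correlation (fun n => (norm_eFun _).le) ?_
  filter_upwards [eventually_gt_atTop 0] with h hh
  have hθ : Irrational ((2 * h : ℕ) * γ) := hγ.natCast_mul (by omega)
  convert hasMean_eFun_linear hθ.ne_int (γ * h ^ 2 + δ * h) using 2 with n
  rw [← eFun_sub]
  push_cast
  ring_nf

lemma hasMean_eFun_quadratic_of_rat (γ : ℚ) {δ : ℝ} (hδ : Irrational δ) :
    HasMean (fun n => eFun (γ * n ^ 2 + δ * n)) 0 := by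
  refine hasMean_zero_of_ratio (q := γ.den) (w := eFun (γ.den * δ)) (C := 1) (fun h => ?_)
    (fun n => (norm_eFun _).le) fun n => ?_
  · obtain ⟨m, hm⟩ := eFun_eq_one_iff.1 h
    exact (hδ.natCast_mul γ.den_nz).ne_int m hm
  · have hden : (γ : ℝ) * γ.den = γ.num := by exact_mod_cast γ.mul_den_eq_num
    rw [← eFun_add, ← eFun_add_intCast (γ.den * δ + _) (γ.num * (2 * n + γ.den))]
    congr 1
    push_cast
    rw [← hden]
    ring

theorem hasMean_eFun_quadratic {γ δ : ℝ} (h : Irrational γ ∨ Irrational δ) :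
    HasMean (fun n => eFun (γ * n ^ 2 + δ * n)) 0 := by
  by_cases hγ : Irrational γ
  · exact hasMean_eFun_quadratic_of_irrational hγ δ
  · obtain ⟨r, rfl⟩ : ∃ r : ℚ, (r : ℝ) = γ := by simpa [Irrational] using hγ
    exact hasMean_eFun_quadratic_of_rat r (h.resolve_left hγ)

/-! ### Weighted equidistribution -/

section ContinuousOffNullSet

variable {X : Type*} [TopologicalSpace X] {K : Set X} {f : X → ℂ} {C D : ℝ}

/-- Off `K` this is a product of continuous functions; on `K` the factor `1 - χ` vanishes and `f`
stays bounded. -/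
lemma continuous_one_sub_mul (hfD : ∀ x, ‖f x‖ ≤ D) (hK : IsClosed K) (hf : ContinuousOn f Kᶜ)
    {χ : X → ℝ} (hχ : Continuous χ) (hχK : ∀ x ∈ K, χ x = 1) :
    Continuous fun x => ((1 - χ x : ℝ) : ℂ) * f x := by
  have hχc : Continuous fun x => ((1 - χ x : ℝ) : ℂ) := by fun_prop
  refine continuous_iff_continuousAt.2 fun x => ?_
  by_cases hx : x ∈ K
  · have h0 : Tendsto (fun y => ((1 - χ y : ℝ) : ℂ)) (𝓝 x) (𝓝 0) := by
      simpa [hχK x hx] using hχc.tendsto x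
    have h := h0.zero_mul_isBoundedUnder_le (g := f) (isBoundedUnder_of ⟨D, hfD⟩)
    simpa [ContinuousAt, hχK x hx] using h
  · exact hχc.continuousAt.mul (hf.continuousAt (hK.isOpen_compl.mem_nhds hx))

variable [MeasurableSpace X] [BorelSpace X] {μ : Measure X} [IsFiniteMeasure μ]

lemma exists_continuous_bump [HasOuterApproxClosed X] (hK : IsClosed K) (hμK : μ K = 0) {ε : ℝ}
    (hε : 0 < ε) :
    ∃ χ : X → ℝ, Continuous χ ∧ (∀ x, χ x ∈ Set.Icc 0 1) ∧ (∀ x ∈ K, χ x = 1) ∧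
      ∫ x, χ x ∂μ < ε := by
  have lim := HasOuterApproxClosed.tendsto_lintegral_apprSeq hK μ
  rw [hμK] at lim
  obtain ⟨n, hn⟩ := (lim.eventually_lt_const (ENNReal.ofReal_pos.2 hε)).exists
  refine ⟨fun x => hK.apprSeq n x, by fun_prop, fun x => ⟨NNReal.coe_nonneg _, ?_⟩,
    fun x hx => ?_, ?_⟩
  · exact_mod_cast HasOuterApproxClosed.apprSeq_apply_le_one hK n x
  · simp only [HasOuterApproxClosed.apprSeq_apply_eq_one hK n hx, NNReal.coe_one]
  · rw [← BoundedContinuousFunction.toReal_lintegral_coe_eq_integral]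
    exact ENNReal.toReal_lt_of_lt_ofReal hn

lemma integrable_of_continuousOn_compl (hfD : ∀ x, ‖f x‖ ≤ D) (hK : IsClosed K) (hμK : μ K = 0)
    (hf : ContinuousOn f Kᶜ) : Integrable f μ := by
  have hrestrict : μ.restrict Kᶜ = μ := Measure.restrict_eq_self_of_ae_mem (compl_mem_ae_iff.2 hμK)
  have hmeas : AEStronglyMeasurable f μ := by
    rw [← hrestrict]
    exact hf.aestronglyMeasurable hK.measurableSet.compl
  exact .of_bound hmeas D (ae_of_all _ hfD)

lemma exists_continuousMap_norm_sub_le [HasOuterApproxClosed X] (hD : 0 ≤ D)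
    (hfD : ∀ x, ‖f x‖ ≤ D) (hK : IsClosed K) (hμK : μ K = 0) (hf : ContinuousOn f Kᶜ) {ε : ℝ}
    (hε : 0 < ε) :
    ∃ (g : C(X, ℂ)) (G : C(X, ℝ)), (∀ x, ‖g x - f x‖ ≤ G x) ∧ ∫ x, G x ∂μ < ε := by
  obtain ⟨χ, hχ, hχ01, hχK, hχε⟩ := exists_continuous_bump hK hμK (ε := ε / (D + 1))
    (by positivity)
  refine ⟨⟨_, continuous_one_sub_mul hfD hK hf hχ hχK⟩, ⟨fun x => D * χ x, by fun_prop⟩,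
    fun x => ?_, ?_⟩
  · have : ((1 - χ x : ℝ) : ℂ) * f x - f x = -(χ x * f x) := by
      push_cast
      ring
    rw [ContinuousMap.coe_mk, this, norm_neg, norm_mul, Complex.norm_of_nonneg (hχ01 x).1, mul_comm]
    exact mul_le_mul_of_nonneg_right (hfD x) (hχ01 x).1
  · rw [lt_div_iff₀ (by positivity)] at hχε
    simp only [ContinuousMap.coe_mk, integral_const_mul]
    nlinarith [integral_nonneg (μ := μ) (f := χ) fun x => (hχ01 x).1]

variable [CompactSpace X]

lemma integrable_continuousMap {E : Type*} [NormedAddCommGroup E] (g : C(X, E)) :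
    Integrable g μ :=
  g.continuous.integrable_of_hasCompactSupport (.of_compactSpace _)

theorem hasMean_continuousOn_mul [HasOuterApproxClosed X] {φ : ℕ → X} {v : ℕ → ℂ} {L : ℂ}
    (hv : ∀ n, ‖v n‖ ≤ C) (hφ : ∀ g : C(X, ℂ), HasMean (fun n => g (φ n)) (∫ x, g x ∂μ))
    (hφv : ∀ g : C(X, ℂ), HasMean (fun n => g (φ n) * v n) ((∫ x, g x ∂μ) * L))
    (hfD : ∀ x, ‖f x‖ ≤ D) (hK : IsClosed K) (hμK : μ K = 0) (hf : ContinuousOn f Kᶜ) :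
    HasMean (fun n => f (φ n) * v n) ((∫ x, f x ∂μ) * L) := by
  have hC : 0 ≤ C := (norm_nonneg _).trans (hv 0)
  refine hasMean_of_forall_approx fun ε hε => ?_
  obtain ⟨g, G, hgf, hGε⟩ := exists_continuousMap_norm_sub_le ((norm_nonneg _).trans (hfD (φ 0)))
    hfD hK hμK hf (ε := ε / (C + ‖L‖ + 1)) (by positivity)
  have hG : 0 ≤ ∫ x, G x ∂μ := integral_nonneg fun x => (norm_nonneg _).trans (hgf x)
  have hint : ‖∫ x, g x ∂μ - ∫ x, f x ∂μ‖ ≤ ∫ x, G x ∂μ := by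
    rw [← integral_sub (integrable_continuousMap g)
      (integrable_of_continuousOn_compl hfD hK hμK hf)]
    exact norm_integral_le_of_norm_le (integrable_continuousMap G) (ae_of_all _ hgf)
  rw [lt_div_iff₀ (by positivity)] at hGε
  refine ⟨_, _, hφv g, ?_, ?_⟩
  · rw [← sub_mul, norm_mul]
    nlinarith [norm_nonneg L]
  · have lim : Tendsto (fun N => ‖cesaroMean N fun n => ((C * G (φ n) : ℝ) : ℂ)‖) atTop
        (𝓝 (C * ∫ x, G x ∂μ)) := by
      have h := ((hφ ⟨fun x => (G x : ℂ), by fun_prop⟩).const_mul C).norm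
      simp only [ContinuousMap.coe_mk, integral_complex_ofReal, ← Complex.ofReal_mul] at h
      rwa [Complex.norm_of_nonneg (by positivity)] at h
    filter_upwards [lim.eventually_le_const (u := ε) (by nlinarith [norm_nonneg L])] with N hN
    refine (norm_cesaroMean_le_norm_ofReal (fun n => ?_) N).trans hN
    rw [Pi.sub_apply, ← sub_mul, norm_mul, norm_sub_rev, mul_comm]
    exact mul_le_mul (hv n) (hgf _) (norm_nonneg _) hC

end ContinuousOffNullSet

section Circle

variable {φ : ℕ → UnitAddCircle} {v : ℕ → ℂ} {L : ℂ} {C : ℝ}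

lemma fourier_coe_eq_eFun (k : ℤ) (x : ℝ) : fourier k (x : UnitAddCircle) = eFun (k * x) := by
  rw [fourier_coe_apply, eFun]
  congr 1
  push_cast
  ring

lemma integral_fourier_of_ne_zero {k : ℤ} (hk : k ≠ 0) :
    ∫ x : UnitAddCircle, fourier k x = 0 := by
  have h := congrFun (fourierCoeff_fourier (T := 1) k) 0
  rw [Pi.single_eq_of_ne hk.symm] at h
  simpa [fourierCoeff, AddCircle.integral_haarAddCircle] using h

lemma hasMean_span_fourier_mul (hL : HasMean v L)
    (h : ∀ k : ℤ, k ≠ 0 → HasMean (fun n => fourier k (φ n) * v n) 0) {g : C(UnitAddCircle, ℂ)}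
    (hg : g ∈ Submodule.span ℂ (Set.range (@fourier 1))) :
    HasMean (fun n => g (φ n) * v n) ((∫ x, g x) * L) := by
  induction hg using Submodule.span_induction with
  | mem g hg =>
    obtain ⟨k, rfl⟩ := hg
    rcases eq_or_ne k 0 with rfl | hk
    · simpa [measureReal_def] using hL
    · simpa only [integral_fourier_of_ne_zero hk, zero_mul] using h k hk
  | zero => simpa using hasMean_const 0
  | add f g _ _ hf hg =>
    simpa [add_mul, integral_add (integrable_continuousMap f) (integrable_continuousMap g)]
      using hf.add hg
  | smul c g _ hg => simpa [mul_assoc, integral_const_mul] using hg.const_mul c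

lemma hasMean_continuous_mul (hv : ∀ n, ‖v n‖ ≤ C) (hL : HasMean v L)
    (h : ∀ k : ℤ, k ≠ 0 → HasMean (fun n => fourier k (φ n) * v n) 0) (f : C(UnitAddCircle, ℂ)) :
    HasMean (fun n => f (φ n) * v n) ((∫ x, f x) * L) := by
  have hC : 0 ≤ C := (norm_nonneg _).trans (hv 0)
  have hf : f ∈ (Submodule.span ℂ (Set.range (@fourier 1))).topologicalClosure := by
    rw [span_fourier_closure_eq_top]
    trivial
  refine hasMean_of_forall_approx fun ε hε => ?_
  obtain ⟨g, hg, hfg⟩ := Metric.mem_closure_iff.1 hf (ε / (C + ‖L‖ + 1)) (by positivity)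
  rw [lt_div_iff₀ (by positivity)] at hfg
  have hd (x : UnitAddCircle) : ‖g x - f x‖ ≤ dist f g := by
    rw [← dist_eq_norm, dist_comm]
    exact ContinuousMap.dist_apply_le_dist x
  refine ⟨_, _, hasMean_span_fourier_mul hL h hg, ?_, .of_forall fun N => ?_⟩
  · rw [← sub_mul, ← integral_sub (integrable_continuousMap g) (integrable_continuousMap f),
      norm_mul]
    have := norm_integral_le_of_norm_le_const (μ := (volume : Measure UnitAddCircle))
      (ae_of_all _ hd)
    rw [measureReal_def, UnitAddCircle.measure_univ, ENNReal.toReal_one, mul_one] at this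
    nlinarith [norm_nonneg L, dist_nonneg (x := f) (y := g)]
  · refine (norm_cesaroMean_le (C := dist f g * C) (fun n => ?_) N).trans ?_
    · rw [Pi.sub_apply, ← sub_mul, norm_mul, norm_sub_rev]
      gcongr
      exacts [hd _, hv n]
    · nlinarith [norm_nonneg L, dist_nonneg (x := f) (y := g)]

theorem hasMean_circle_mul (hφ : ∀ k : ℤ, k ≠ 0 → HasMean (fun n => fourier k (φ n)) 0)
    (hv : ∀ n, ‖v n‖ ≤ C) (hL : HasMean v L)
    (hφv : ∀ k : ℤ, k ≠ 0 → HasMean (fun n => fourier k (φ n) * v n) 0)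
    {f : UnitAddCircle → ℂ} {D : ℝ} (hfD : ∀ x, ‖f x‖ ≤ D) {K : Set UnitAddCircle}
    (hK : IsClosed K) (hK0 : volume K = 0) (hf : ContinuousOn f Kᶜ) :
    HasMean (fun n => f (φ n) * v n) ((∫ x, f x) * L) := by
  refine hasMean_continuousOn_mul hv (fun g => ?_) (hasMean_continuous_mul hv hL hφv) hfD hK hK0 hf
  simpa using hasMean_continuous_mul (v := 1) (C := 1) (L := 1) (by simp) (hasMean_const 1)
    (by simpa using hφ) g

end Circle

/-! ### The centred representative -/

/-- The representative in `[-1/2, 1/2)` of a point of the circle. -/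
noncomputable def centeredRep (x : UnitAddCircle) : ℝ := AddCircle.equivIco 1 (-1 / 2) x

lemma coe_centeredRep (x : UnitAddCircle) : (centeredRep x : UnitAddCircle) = x :=
  (AddCircle.equivIco 1 (-1 / 2)).symm_apply_apply x

lemma centeredRep_mem_Ico (x : UnitAddCircle) : centeredRep x ∈ Set.Ico (-1 / 2 : ℝ) (1 / 2) := by
  have h := (AddCircle.equivIco 1 (-1 / 2) x).2
  norm_num at h ⊢
  exact h

lemma centeredRep_coe (x : ℝ) : centeredRep x = x - round x := by
  have hper : (x : UnitAddCircle) = (x - round x : ℝ) := by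
    rw [AddCircle.coe_sub, sub_eq_self.2]
    exact (AddCircle.coe_eq_zero_iff 1).2 ⟨round x, by simp⟩
  have hmem := round_eq_iff.1 (rfl : round x = round x)
  rw [hper, centeredRep, AddCircle.equivIco_coe_eq]
  constructor <;> linarith [hmem.1, hmem.2]

lemma abs_centeredRep (x : UnitAddCircle) : |centeredRep x| = ‖x‖ := by
  rw [← coe_centeredRep x, UnitAddCircle.norm_eq, centeredRep_coe]

lemma continuousAt_centeredRep {x : UnitAddCircle} (hx : x ≠ (-1 / 2 : ℝ)) :
    ContinuousAt centeredRep x :=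
  continuous_subtype_val.continuousAt.comp (AddCircle.continuousAt_equivIco 1 _ hx)

/-- The value of `round (y + s) - round y`, as a function of the class of `y` in the circle. -/
noncomputable def roundJump (s : ℝ) (x : UnitAddCircle) : ℝ :=
  s + centeredRep x - centeredRep (x + s)

lemma roundJump_coe (s y : ℝ) :
    roundJump s y = (round (y + s) - round y : ℤ) := by
  rw [roundJump, ← AddCircle.coe_add, centeredRep_coe, centeredRep_coe]
  push_cast
  ring

lemma abs_roundJump_sub_le (s : ℝ) (x : UnitAddCircle) : |roundJump s x - s| ≤ 1 := by
  have h1 := centeredRep_mem_Ico x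
  have h2 := centeredRep_mem_Ico (x + s)
  rw [roundJump, abs_le]
  constructor <;> linarith [h1.1, h1.2, h2.1, h2.2]

instance : NullSingletonClass (volume : Measure UnitAddCircle) where
  measure_singleton x := by
    rw [← Metric.closedBall_zero (x := x), AddCircle.volume_closedBall]
    simp

/-! ### Bracket quadratic phases -/

section Bracket

variable {α β : ℝ}

lemma int_coeff_eq_zero (h : LinearIndependent ℤ ![1, α, β]) {a b c : ℤ}
    (habc : a + b * α + c * β = 0) : a = 0 ∧ b = 0 ∧ c = 0 := by
  have := Fintype.linearIndependent_iff.1 h ![a, b, c] (by simpa [Fin.sum_univ_three] using habc)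
  exact ⟨this 0, this 1, this 2⟩

lemma irrational_of_linearIndependent (h : LinearIndependent ℤ ![1, α, β]) : Irrational α := by
  rintro ⟨r, rfl⟩
  have := int_coeff_eq_zero (a := r.num) (b := -r.den) (c := 0) h (by
    have : (r : ℝ) * r.den = r.num := by exact_mod_cast r.mul_den_eq_num
    push_cast
    linarith)
  exact r.den_nz (by simpa using this.2.1)

/-- Two shifts `h₀ < h` violating the conclusion for the same `β`-multiple would give a relation
between `1`, `α`, `β` unless `c₀ / h₀ = c / h`; as `c` is within `1` of `hα`, this bounds `h`. -/
lemma eventually_ne_int_add_int_mul (hli : LinearIndependent ℤ ![1, α, β]) {k : ℤ} (hk : k ≠ 0)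
    (η : ℝ) :
    ∀ᶠ h : ℕ in atTop, ∀ c : ℤ, |c - h * α| ≤ 1 → ∀ a b : ℤ, k * β * c + h * η ≠ a + b * α := by
  by_contra hbad
  simp only [not_eventually] at hbad
  push Not at hbad
  obtain ⟨h₀, ⟨c₀, -, a₀, b₀, e₀⟩, h₀pos⟩ := (hbad.and_eventually (eventually_gt_atTop 0)).exists
  set d := c₀ - h₀ * α
  have hd : 0 < |d| := by
    refine abs_pos.2 fun hd => ?_
    have := int_coeff_eq_zero (a := c₀) (b := -h₀) (c := 0) hli (by push_cast; linarith)
    omega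
  obtain ⟨h, ⟨c, hc, a, b, e⟩, hlarge⟩ :=
    (hbad.and_eventually (tendsto_natCast_atTop_atTop.eventually_gt_atTop (h₀ / |d|))).exists
  have hcross : (h : ℤ) * c₀ = h₀ * c := by
    have := int_coeff_eq_zero (a := h₀ * a - h * a₀) (b := h₀ * b - h * b₀)
      (c := k * (h * c₀ - h₀ * c)) hli (by push_cast; linear_combination h * e₀ - h₀ * e)
    simpa [hk, sub_eq_zero] using this.2.2
  have hscaled : h * |d| = h₀ * |c - h * α| := by
    have : (h : ℝ) * c₀ = h₀ * c := by exact_mod_cast hcross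
    have : h * d = h₀ * (c - h * α) := by linear_combination this
    simpa only [abs_mul, Nat.abs_cast] using congrArg abs this
  rw [div_lt_iff₀ hd] at hlarge
  nlinarith [(Nat.cast_nonneg h₀ : (0 : ℝ) ≤ h₀)]

lemma hasMean_continuousOn_mul_eFun (hα : Irrational α) {θ : ℝ}
    (hθ : ∀ a b : ℤ, θ ≠ a + b * α) {f : UnitAddCircle → ℂ} {D : ℝ} (hfD : ∀ x, ‖f x‖ ≤ D)
    {K : Set UnitAddCircle} (hK : IsClosed K) (hK0 : volume K = 0) (hf : ContinuousOn f Kᶜ) :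
    HasMean (fun n => f (n * α : ℝ) * eFun (n * θ)) 0 := by
  have linear {t : ℝ} (ht : ∀ m : ℤ, t ≠ m) : HasMean (fun n => eFun (n * t)) 0 := by
    simpa using hasMean_eFun_linear ht 0
  have h := hasMean_circle_mul (φ := fun n : ℕ => (n * α : ℝ)) (v := fun n => eFun (n * θ))
    (C := 1) (L := 0) (fun k hk => ?_) (fun n => (norm_eFun _).le)
    (linear fun m => by simpa using hθ m 0) (fun k _ => ?_) hfD hK hK0 hf
  · simpa using h
  · simp_rw [fourier_coe_eq_eFun, mul_left_comm (k : ℝ)]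
    exact linear fun m => (hα.intCast_mul hk).ne_int m
  · simp_rw [fourier_coe_eq_eFun, ← eFun_add, mul_left_comm (k : ℝ), ← mul_add]
    refine linear fun m hm => hθ m (-k) ?_
    push_cast
    linarith

/-- The indicator of the level set `{x | roundJump s x = c}` times the phase
`e(ξ (y - round y))`, `y = x + s`. As `roundJump s` is integer-valued, the indicator can be written
as a tent function of it, which makes the continuity points visible. -/
noncomputable def jumpPiece (s ξ : ℝ) (c : ℤ) (x : UnitAddCircle) : ℂ :=
  (max 0 (1 - |roundJump s x - c|) : ℝ) * eFun (ξ * centeredRep (x + s))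

lemma norm_jumpPiece_le (s ξ : ℝ) (c : ℤ) (x : UnitAddCircle) : ‖jumpPiece s ξ c x‖ ≤ 1 := by
  rw [jumpPiece, norm_mul, norm_eFun, mul_one, Complex.norm_of_nonneg (le_max_left _ _)]
  exact max_le zero_le_one (sub_le_self _ (abs_nonneg _))

lemma jumpPiece_coe (s ξ y : ℝ) (c : ℤ) :
    jumpPiece s ξ c y =
      if round (y + s) - round y = c then eFun (ξ * (y + s - round (y + s))) else 0 := by
  rw [jumpPiece, roundJump_coe, ← AddCircle.coe_add, centeredRep_coe]
  split_ifs with h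
  · simp [h]
  · have : (1 : ℝ) ≤ |((round (y + s) - round y : ℤ) : ℝ) - c| := by
      exact_mod_cast Int.one_le_abs (sub_ne_zero.2 h)
    rw [max_eq_left (by linarith), Complex.ofReal_zero, zero_mul]

lemma continuousOn_jumpPiece (s ξ : ℝ) (c : ℤ) :
    ContinuousOn (jumpPiece s ξ c)
      ({↑(-1 / 2 : ℝ), ↑(-1 / 2 - s : ℝ)} : Set UnitAddCircle)ᶜ := by
  intro x hx
  simp only [Set.mem_compl_iff, Set.mem_insert_iff, Set.mem_singleton_iff, not_or,
    AddCircle.coe_sub, eq_sub_iff_add_eq] at hx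
  have hrep : ContinuousAt (fun x => centeredRep (x + s)) x :=
    (continuousAt_centeredRep hx.2).comp (f := (· + (s : UnitAddCircle))) (by fun_prop)
  have hjump : ContinuousAt (roundJump s) x :=
    (continuousAt_const.add (continuousAt_centeredRep hx.1)).sub hrep
  have heFun : Continuous eFun := by unfold eFun; fun_prop
  refine ContinuousAt.continuousWithinAt (ContinuousAt.mul ?_ ?_)
  · exact Complex.continuous_ofReal.continuousAt.comp
      (continuousAt_const.max (continuousAt_const.sub (hjump.sub continuousAt_const).abs))
  · exact heFun.continuousAt.comp (continuousAt_const.mul hrep)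

lemma hasMean_eFun_round_sub_round (hα : Irrational α) {s ξ : ℝ} {θ : ℤ → ℝ}
    (hθ : ∀ c : ℤ, |c - s| ≤ 1 → ∀ a b : ℤ, θ c ≠ a + b * α) :
    HasMean (fun n => eFun (n * θ (round (n * α + s) - round (n * α)) +
      ξ * (n * α + s - round (n * α + s)))) 0 := by
  have mem_values (c : ℤ) : c ∈ Icc ⌈s - 1⌉ ⌊s + 1⌋ ↔ |c - s| ≤ 1 := by
    rw [mem_Icc, Int.ceil_le, Int.le_floor, abs_le]
    constructor <;> exact fun h => ⟨by linarith [h.1], by linarith [h.2]⟩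
  have hpieces := hasMean_sum (Icc ⌈s - 1⌉ ⌊s + 1⌋) fun c hc =>
    hasMean_continuousOn_mul_eFun hα (hθ c ((mem_values c).1 hc)) (norm_jumpPiece_le s ξ c)
      (Set.toFinite _).isClosed ((Set.toFinite _).measure_zero _) (continuousOn_jumpPiece s ξ c)
  convert hpieces using 1
  · ext n
    have hmem : round (n * α + s) - round (n * α) ∈ Icc ⌈s - 1⌉ ⌊s + 1⌋ := by
      rw [mem_values, ← roundJump_coe]
      exact abs_roundJump_sub_le s _
    simp_rw [jumpPiece_coe, ite_mul, zero_mul]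
    rw [sum_ite_eq, if_pos hmem, ← eFun_add, add_comm]
  · rw [sum_const_zero]

theorem hasMean_eFun_bracket (hli : LinearIndependent ℤ ![1, α, β]) {k : ℤ} (hk : k ≠ 0)
    (γ δ : ℝ) :
    HasMean (fun n => eFun (k * β * n * round (n * α) + γ * n ^ 2 + δ * n)) 0 := by
  refine hasMean_zero_of_correlation (fun n => (norm_eFun _).le) ?_
  filter_upwards [eventually_ne_int_add_int_mul hli hk (k * β * α + 2 * γ)] with h hh
  convert (hasMean_eFun_round_sub_round (irrational_of_linearIndependent hli) hh
    (ξ := -k * h * β)).const_mul (eFun (k * β * α * h ^ 2 + γ * h ^ 2 + δ * h)) using 1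
  · ext n
    rw [← eFun_sub, ← eFun_add]
    congr 1
    push_cast
    ring_nf
  · simp

end Bracket

lemma continuousOn_indicator_compl_frontier (E : Set UnitAddCircle) :
    ContinuousOn (E.indicator (1 : UnitAddCircle → ℂ)) (frontier E)ᶜ := by
  intro x hx
  refine ContinuousAt.continuousWithinAt ?_
  rw [compl_frontier_eq_union_interior] at hx
  rcases hx with hx | hx
  · refine (continuousAt_const (y := (1 : ℂ))).congr ?_
    filter_upwards [mem_interior_iff_mem_nhds.1 hx] with y hy
    rw [Set.indicator_of_mem hy, Pi.one_apply]
  · refine (continuousAt_const (y := (0 : ℂ))).congr ?_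
    filter_upwards [mem_interior_iff_mem_nhds.1 hx] with y hy
    rw [Set.indicator_of_notMem hy]

lemma hasMean_circle_indicator {φ : ℕ → UnitAddCircle} {v : ℕ → ℂ} {L : ℂ} {C : ℝ}
    (hφ : ∀ k : ℤ, k ≠ 0 → HasMean (fun n => fourier k (φ n)) 0)
    (hv : ∀ n, ‖v n‖ ≤ C) (hL : HasMean v L)
    (hφv : ∀ k : ℤ, k ≠ 0 → HasMean (fun n => fourier k (φ n) * v n) 0)
    {E : Set UnitAddCircle} (hE : MeasurableSet E) (hE0 : volume (frontier E) = 0) :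
    HasMean ((φ ⁻¹' E).indicator v) (volume.real E * L) := by
  have bound (x : UnitAddCircle) : ‖E.indicator (1 : UnitAddCircle → ℂ) x‖ ≤ 1 := by
    simpa using norm_indicator_le_norm_self (1 : UnitAddCircle → ℂ) x
  convert hasMean_circle_mul hφ hv hL hφv bound isClosed_frontier hE0
    (continuousOn_indicator_compl_frontier E) using 1
  · ext n
    by_cases h : φ n ∈ E <;> simp [h]
  · simp [integral_indicator hE]

/-! ### Enumerating a set of positive density -/

section Enumeration

variable {S : Set ℕ} {c L : ℂ} {v : ℕ → ℂ}

lemma sum_range_indicator_eq_sum_nth [DecidablePred (· ∈ S)] (v : ℕ → ℂ) (M : ℕ) :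
    ∑ m ∈ range M, S.indicator v m = ∑ n ∈ range (Nat.count (· ∈ S) M), v (Nat.nth (· ∈ S) n) := by
  induction M with
  | zero => simp
  | succ M ih =>
    rw [sum_range_succ, ih, Nat.count_succ]
    split_ifs with h
    · rw [sum_range_succ, Nat.nth_count h, Set.indicator_of_mem h]
    · rw [Set.indicator_of_notMem h, add_zero, add_zero]

lemma infinite_of_hasMean_indicator (hc : c ≠ 0) (hS : HasMean (S.indicator 1) c) :
    S.Infinite := by
  classical
  intro hfin
  refine hc (tendsto_nhds_unique hS ?_)
  refine squeeze_zero_norm (fun N => ?_)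
    (tendsto_const_div_atTop_nhds_zero_nat (#hfin.toFinset : ℝ))
  simp_rw [cesaroMean_apply, Set.indicator_apply, Pi.one_apply]
  rw [sum_boole, norm_mul, norm_inv, Complex.norm_natCast, Complex.norm_natCast, div_eq_inv_mul]
  gcongr
  exact fun n hn => hfin.mem_toFinset.2 (mem_filter.1 hn).2

lemma hasMean_comp_nth (hc : c ≠ 0) (hS : HasMean (S.indicator 1) c)
    (hv : HasMean (S.indicator v) L) : HasMean (fun n => v (Nat.nth (· ∈ S) n)) (L / c) := by
  classical
  have hinf : {n | n ∈ S}.Infinite := infinite_of_hasMean_indicator hc hS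
  have hmono : StrictMono (Nat.nth (· ∈ S)) := Nat.nth_strictMono hinf
  refine ((hv.div hS hc).comp hmono.tendsto_atTop).congr fun N => ?_
  have count_nth : Nat.count (· ∈ S) (Nat.nth (· ∈ S) N) = N :=
    Nat.count_nth_of_infinite (p := (· ∈ S)) hinf N
  simp only [Function.comp_apply, Pi.div_apply, cesaroMean_apply, sum_range_indicator_eq_sum_nth]
  simp only [count_nth, Pi.one_apply, sum_const, card_range, nsmul_one]
  rcases Nat.eq_zero_or_pos N with rfl | hN
  · simp
  have hM : (Nat.nth (· ∈ S) N : ℂ) ≠ 0 := by exact_mod_cast (hN.trans_le hmono.le_apply).ne'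
  have hN' : (N : ℂ) ≠ 0 := by exact_mod_cast hN.ne'
  field_simp

lemma tendsto_card_filter_div {p : ℕ → Prop} [DecidablePred p] {c : ℝ}
    (h : HasMean (fun n => if p n then 1 else 0) c) :
    Tendsto (fun N : ℕ => (#{n ∈ range N | p n} : ℝ) / N) atTop (𝓝 c) := by
  rw [← Complex.ofReal_re c]
  refine ((Complex.continuous_re.tendsto _).comp h).congr fun N => ?_
  rw [Function.comp_apply, cesaroMean_apply, sum_boole, ← Complex.ofReal_natCast,
    ← Complex.ofReal_natCast, ← Complex.ofReal_inv, ← Complex.ofReal_mul, Complex.ofReal_re,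
    div_eq_inv_mul]

end Enumeration

/-! ### The set of integers with a far phase -/

lemma ite_dvd_eq_sum_eFun {d : ℕ} (hd : d ≠ 0) (n : ℕ) :
    (if d ∣ n then 1 else 0 : ℂ) = (d : ℂ)⁻¹ * ∑ a ∈ range d, eFun (a / d * n) := by
  have hd' : (d : ℝ) ≠ 0 := by exact_mod_cast hd
  have eFun_eq_pow (a : ℕ) : eFun (a / d * n) = eFun (n / d) ^ a := by
    rw [eFun, eFun, ← Complex.exp_nat_mul]
    push_cast
    ring_nf
  have eFun_eq_one : eFun (n / d) = 1 ↔ d ∣ n := by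
    simp_rw [eFun_eq_one_iff, div_eq_iff hd', ← Int.natCast_dvd_natCast, dvd_def, mul_comm (d : ℤ)]
    norm_cast
  simp_rw [eFun_eq_pow]
  split_ifs with h
  · simp [eFun_eq_one.2 h, hd]
  · have pow_eq_one : eFun (n / d) ^ d = 1 := by
      rw [← eFun_eq_pow, div_self hd', one_mul]
      exact eFun_intCast n
    rw [geom_sum_eq (mt eFun_eq_one.1 h), pow_eq_one]
    simp

lemma hasMean_eFun_div_mul {a d : ℕ} (ha : a < d) :
    HasMean (fun n => eFun (a / d * n)) (if a = 0 then 1 else 0) := by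
  have hd : (0 : ℝ) < d := by exact_mod_cast ha.pos
  split_ifs with h
  · simpa [h, eFun_zero] using hasMean_const 1
  · have key := hasMean_eFun_linear (θ := a / d) (fun m hm => ?_) 0
    · simpa [mul_comm] using key
    · rw [div_eq_iff hd.ne'] at hm
      have hdvd : d ∣ a := Int.natCast_dvd_natCast.1 ⟨m, by rw [mul_comm]; exact_mod_cast hm⟩
      exact h (Nat.eq_zero_of_dvd_of_lt hdvd ha)

/-- The points of the circle at distance at least `1 / 4` from the origin. -/
def farHalf : Set UnitAddCircle := {x | 1 / 4 ≤ ‖x‖}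

lemma isClosed_farHalf : IsClosed farHalf := isClosed_le continuous_const continuous_norm

lemma volume_frontier_farHalf : volume (frontier farHalf) = 0 := by
  have sphere_subset : {x : UnitAddCircle | 1 / 4 = ‖x‖} ⊆ {↑(1 / 4 : ℝ), ↑(-(1 / 4) : ℝ)} := by
    intro x hx
    rw [Set.mem_ofPred_eq, ← abs_centeredRep, eq_comm, abs_eq (by norm_num)] at hx
    rw [← coe_centeredRep x]
    exact hx.imp (congrArg _) (congrArg _)
  exact measure_mono_null
    ((frontier_le_subset_eq continuous_const continuous_norm).trans sphere_subset)
    ((Set.toFinite _).measure_zero _)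

lemma volume_real_farHalf_pos : 0 < volume.real farHalf := by
  have hopen : IsOpen {x : UnitAddCircle | 1 / 4 < ‖x‖} :=
    isOpen_lt continuous_const continuous_norm
  have half_mem : 1 / 4 < ‖((1 / 2 : ℝ) : UnitAddCircle)‖ := by
    rw [UnitAddCircle.norm_eq]
    norm_num [round_eq]
  have hsub : {x : UnitAddCircle | 1 / 4 < ‖x‖} ⊆ farHalf :=
    fun x (hx : 1 / 4 < ‖x‖) => hx.le
  exact ENNReal.toReal_pos
    ((hopen.measure_pos volume ⟨_, half_mem⟩).trans_le (measure_mono hsub)).ne'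
    (measure_ne_top _ _)

/-- The bracket quadratic phase `β n (2⟨n α⟩ - n α)`, where `⟨·⟩` is the nearest integer. It is
the second difference, along `0, n, 2n`, of the fibre coordinate of `skewMap`. -/
noncomputable def bracketPhase (α β : ℝ) (n : ℕ) : ℝ := β * n * (2 * round (n * α) - n * α)

/-- The `n` for which the bracket quadratic phase is at distance at least `1 / 4` from `0` modulo
`1`; along such steps `skewMap` has no double returns to `skewBox`. -/
def farPhaseSet (α β : ℝ) : Set ℕ := (fun n => (bracketPhase α β n : UnitAddCircle)) ⁻¹' farHalf

lemma pos_of_mem_farPhaseSet {α β : ℝ} {n : ℕ} (h : n ∈ farPhaseSet α β) : 0 < n := by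
  refine Nat.pos_of_ne_zero ?_
  rintro rfl
  norm_num [farPhaseSet, farHalf, bracketPhase] at h

section FarPhaseSet

variable {α β : ℝ} (hli : LinearIndependent ℤ ![1, α, β])
include hli

lemma hasMean_fourier_bracketPhase_mul_eFun {k : ℤ} (hk : k ≠ 0) (γ δ : ℝ) :
    HasMean (fun n => fourier k (bracketPhase α β n : UnitAddCircle) *
      eFun (γ * n ^ 2 + δ * n)) 0 := by
  convert hasMean_eFun_bracket hli (mul_ne_zero hk two_ne_zero) (γ - k * α * β) δ using 2 with n
  rw [fourier_coe_eq_eFun, ← eFun_add, bracketPhase]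
  push_cast
  ring_nf

theorem hasMean_farPhaseSet_indicator {γ δ : ℝ} {L : ℂ}
    (hL : HasMean (fun n => eFun (γ * n ^ 2 + δ * n)) L) :
    HasMean ((farPhaseSet α β).indicator fun n => eFun (γ * n ^ 2 + δ * n))
      (volume.real farHalf * L) :=
  hasMean_circle_indicator
    (fun k hk => by simpa [eFun_zero] using hasMean_fourier_bracketPhase_mul_eFun hli hk 0 0)
    (fun n => (norm_eFun _).le) hL
    (fun k hk => hasMean_fourier_bracketPhase_mul_eFun hli hk γ δ)
    isClosed_farHalf.measurableSet volume_frontier_farHalf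

lemma hasMean_farPhaseSet_indicator_one :
    HasMean ((farPhaseSet α β).indicator 1) (volume.real farHalf) := by
  simpa [eFun_zero, Pi.one_def] using
    hasMean_farPhaseSet_indicator hli (γ := 0) (δ := 0) (L := 1)
      (by simpa [eFun_zero] using hasMean_const 1)

lemma hasMean_farPhaseSet_indicator_dvd {d : ℕ} (hd : d ≠ 0) :
    HasMean ((farPhaseSet α β).indicator fun n => if d ∣ n then 1 else 0)
      (volume.real farHalf / d) := by
  have hterm (a : ℕ) (ha : a ∈ range d) :
      HasMean ((farPhaseSet α β).indicator fun n => eFun (a / d * n))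
        (volume.real farHalf * if a = 0 then 1 else 0) := by
    simpa only [zero_mul, zero_add] using hasMean_farPhaseSet_indicator hli (γ := 0) (δ := a / d)
      (by simpa only [zero_mul, zero_add] using hasMean_eFun_div_mul (mem_range.1 ha))
  convert (hasMean_sum (range d) hterm).const_mul (d : ℂ)⁻¹ using 1
  · ext n
    by_cases h : n ∈ farPhaseSet α β <;> simp [h, ite_dvd_eq_sum_eFun hd]
  · simp [hd.pos, div_eq_inv_mul]

lemma infinite_farPhaseSet : (farPhaseSet α β).Infinite :=
  infinite_of_hasMean_indicator
    (Complex.ofReal_ne_zero.2 volume_real_farHalf_pos.ne') (hasMean_farPhaseSet_indicator_one hli)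

theorem hasMean_nth_farPhaseSet {v : ℕ → ℂ} {L : ℂ}
    (hv : HasMean ((farPhaseSet α β).indicator v) (volume.real farHalf * L)) :
    HasMean (fun n => v (Nat.nth (· ∈ farPhaseSet α β) n)) L := by
  have hc : (volume.real farHalf : ℂ) ≠ 0 := Complex.ofReal_ne_zero.2 volume_real_farHalf_pos.ne'
  simpa [mul_div_cancel_left₀ _ hc] using
    hasMean_comp_nth hc (hasMean_farPhaseSet_indicator_one hli) hv

theorem hasMean_eFun_nth_farPhaseSet {γ δ : ℝ} (h : Irrational γ ∨ Irrational δ) :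
    HasMean (fun n => eFun (γ * (Nat.nth (· ∈ farPhaseSet α β) n : ℝ) ^ 2 +
      δ * Nat.nth (· ∈ farPhaseSet α β) n)) 0 :=
  hasMean_nth_farPhaseSet hli (v := fun n => eFun (γ * n ^ 2 + δ * n))
    (hasMean_farPhaseSet_indicator hli (hasMean_eFun_quadratic h))

theorem tendsto_density_dvd_nth_farPhaseSet {d : ℕ} (hd : d ≠ 0) :
    Tendsto (fun N : ℕ => (#{n ∈ range N | d ∣ Nat.nth (· ∈ farPhaseSet α β) n} : ℝ) / N) atTop
      (𝓝 (d : ℝ)⁻¹) := by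
  refine tendsto_card_filter_div ?_
  push_cast
  exact hasMean_nth_farPhaseSet hli (v := fun n => if d ∣ n then 1 else 0)
    (by simpa [div_eq_mul_inv] using hasMean_farPhaseSet_indicator_dvd hli hd)

end FarPhaseSet

/-! ### A skew product over a rotation of the torus -/

lemma measurable_centeredRep : Measurable centeredRep :=
  measurable_subtype_coe.comp (AddCircle.measurableEquivIco 1 (-1 / 2)).measurable

lemma round_centeredRep (x : UnitAddCircle) : round (centeredRep x) = 0 := by
  rw [round_eq_zero_iff, ← neg_div]
  exact centeredRep_mem_Ico x

/-- The three-dimensional torus, as a product over the two-dimensional base of the skew product. -/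
abbrev SkewTorus : Type := (UnitAddCircle × UnitAddCircle) × UnitAddCircle

/-- The cocycle of the skew product, `(x, y) ↦ round (x + α) (y + β) - β x` for the centred
representative `x`. -/
noncomputable def bracketCocycle (α β : ℝ) (p : UnitAddCircle × UnitAddCircle) : UnitAddCircle :=
  round (centeredRep p.1 + α) • (p.2 + β) - (β * centeredRep p.1 : ℝ)

lemma measurable_bracketCocycle (α β : ℝ) : Measurable (bracketCocycle α β) := by
  have := SubNegMonoid.measurableSMul_int₂ UnitAddCircle
  have hrep : Measurable fun p : UnitAddCircle × UnitAddCircle => centeredRep p.1 :=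
    measurable_centeredRep.comp measurable_fst
  have hround : Measurable fun p : UnitAddCircle × UnitAddCircle =>
      round (centeredRep p.1 + α) := by
    simp_rw [round_eq]
    exact ((hrep.add_const α).add_const _).floor
  exact (hround.smul (measurable_snd.add_const _)).sub
    (AddCircle.measurable_mk'.comp (hrep.const_mul β))

/-- The skew product `((x, y), z) ↦ ((x + α, y + β), bracketCocycle α β (x, y) + z)`, a model of a
rotation on a Heisenberg nilmanifold. -/
noncomputable def skewMap (α β : ℝ) : SkewTorus ≃ᵐ SkewTorus :=
  let step : UnitAddCircle × UnitAddCircle := (↑α, ↑β)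
  { toFun p := (p.1 + step, bracketCocycle α β p.1 + p.2)
    invFun p := (p.1 - step, -bracketCocycle α β (p.1 - step) + p.2)
    left_inv p := by simp
    right_inv p := by simp
    measurable_toFun := (measurable_fst.add_const step).prodMk
      (((measurable_bracketCocycle α β).comp measurable_fst).add measurable_snd)
    measurable_invFun := (measurable_fst.sub_const step).prodMk
      (((measurable_bracketCocycle α β).comp (measurable_fst.sub_const step)).neg.add
        measurable_snd) }

lemma skewMap_apply (α β : ℝ) (x y z : UnitAddCircle) :
    skewMap α β ((x, y), z) = ((x + α, y + β), bracketCocycle α β (x, y) + z) := rfl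

instance : IsProbabilityMeasure (volume : Measure UnitAddCircle) :=
  ⟨UnitAddCircle.measure_univ⟩

lemma measurePreserving_skewMap (α β : ℝ) : MeasurePreserving (skewMap α β) := by
  have hbase : MeasurePreserving
      (fun p : UnitAddCircle × UnitAddCircle => p + ((α : UnitAddCircle), (β : UnitAddCircle))) :=
    (measurePreserving_add_right volume (α : UnitAddCircle)).prod
      (measurePreserving_add_right volume (β : UnitAddCircle))
  exact hbase.skew_product (g := fun p z => bracketCocycle α β p + z)
    (((measurable_bracketCocycle α β).comp measurable_fst).add measurable_snd)
    (ae_of_all _ fun p => (measurePreserving_add_left volume _).map_eq)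

lemma bracketCocycle_coe (α β x : ℝ) (y : UnitAddCircle) :
    bracketCocycle α β (x, y) =
      (round (x + α) - round x) • (y + β) - (β * x : ℝ) + round x • (β : UnitAddCircle) := by
  have hround : round (x - round x + α) = round (x + α) - round x := by
    rw [← round_sub_intCast, sub_add_eq_add_sub]
  rw [bracketCocycle, centeredRep_coe, hround, mul_sub, AddCircle.coe_sub, mul_comm β (round x),
    ← zsmul_eq_mul, AddCircle.coe_zsmul]
  abel

lemma skewMap_pow_apply (α β : ℝ) {x : ℝ} (hx : round x = 0) (y z : UnitAddCircle) (n : ℕ) :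
    ((skewMap α β).toEquiv ^ n) ((x, y), z) =
      ((((x + n * α : ℝ) : UnitAddCircle), y + n • (β : UnitAddCircle)),
        round (x + n * α) • (y + n • (β : UnitAddCircle)) -
          (β * (n * x + α * (n * (n - 1) / 2)) : ℝ) + z) := by
  induction n with
  | zero => simp [hx]
  | succ n ih =>
    rw [pow_succ', Equiv.Perm.mul_apply, ih, MeasurableEquiv.coe_toEquiv, skewMap_apply,
      bracketCocycle_coe]
    have coe_x : x + n * α + α = x + (n + 1 : ℕ) * α := by push_cast; ring
    have coe_y : y + n • (β : UnitAddCircle) + β = y + (n + 1) • (β : UnitAddCircle) := by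
      rw [succ_nsmul, add_assoc]
    have coe_sum : β * ((n + 1 : ℕ) * x + α * ((n + 1 : ℕ) * ((n + 1 : ℕ) - 1) / 2)) =
        β * (n * x + α * (n * (n - 1) / 2)) + β * (x + n * α) := by
      push_cast
      ring
    rw [coe_sum, ← AddCircle.coe_add, coe_x, AddCircle.coe_add (x := β * _), ← coe_y]
    refine Prod.ext rfl ?_
    simp only [sub_smul, smul_add]
    abel

/-- The neighbourhood of the origin to which `skewMap` has no double returns along `farPhaseSet`.
The second base coordinate is unconstrained, as it cancels in the second difference. -/
def skewBox : Set SkewTorus := {p | ‖p.1.1‖ < 1 / 4 ∧ ‖p.2‖ < 1 / 16}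

lemma isOpen_skewBox : IsOpen skewBox :=
  (isOpen_lt (continuous_fst.comp continuous_fst).norm continuous_const).inter
    (isOpen_lt continuous_snd.norm continuous_const)

lemma volume_skewBox_pos : 0 < volume skewBox :=
  isOpen_skewBox.measure_pos volume ⟨0, by norm_num [skewBox]⟩

lemma round_add_eq_round {x s : ℝ} (hx : |x| < 1 / 4) (h₁ : |x + s - round (x + s)| < 1 / 4)
    (h₂ : |x + 2 * s - round (x + 2 * s)| < 1 / 4) :
    round (x + s) = round s ∧ round (x + 2 * s) = 2 * round s := by
  have eq_round {k : ℤ} (h : |s - k| < 1 / 2) : k = round s := by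
    rw [abs_lt] at h
    rw [eq_comm, round_eq, Int.floor_eq_iff]
    constructor <;> linarith
  rw [abs_lt] at hx h₁ h₂
  have first : round (x + s) = round s :=
    eq_round (by rw [abs_lt]; constructor <;> linarith)
  have second : round (x + 2 * s) - round (x + s) = round s :=
    eq_round (by push_cast; rw [abs_lt]; constructor <;> linarith)
  exact ⟨first, by linarith⟩

lemma second_difference_eq_bracketPhase (α β x : ℝ) (y z : UnitAddCircle) (n : ℕ) :
    ((2 * round (n * α)) • (y + (2 * n) • (β : UnitAddCircle)) -
        (β * ((2 * n : ℕ) * x + α * ((2 * n : ℕ) * ((2 * n : ℕ) - 1) / 2)) : ℝ) + z) -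
      2 • (round (n * α) • (y + n • (β : UnitAddCircle)) -
        (β * (n * x + α * (n * (n - 1) / 2)) : ℝ) + z) + z = bracketPhase α β n := by
  induction y using QuotientAddGroup.induction_on with | H y =>
  have : (bracketPhase α β n : ℝ) =
      (2 * round (n * α)) • (y + (2 * n) • β) -
        β * ((2 * n : ℕ) * x + α * ((2 * n : ℕ) * ((2 * n : ℕ) - 1) / 2)) -
      2 • (round (n * α) • (y + n • β) - β * (n * x + α * (n * (n - 1) / 2))) := by
    simp only [bracketPhase, zsmul_eq_mul, nsmul_eq_mul]
    push_cast
    ring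
  rw [this]
  simp only [AddCircle.coe_sub, AddCircle.coe_add, AddCircle.coe_zsmul, AddCircle.coe_nsmul]
  abel

lemma notMem_farPhaseSet_of_mem_skewBox {α β : ℝ} {n : ℕ} {p : SkewTorus} (h₀ : p ∈ skewBox)
    (h₁ : ((skewMap α β).toEquiv ^ n) p ∈ skewBox)
    (h₂ : ((skewMap α β).toEquiv ^ (2 * n)) p ∈ skewBox) : n ∉ farPhaseSet α β := by
  obtain ⟨⟨x', y⟩, z⟩ := p
  obtain ⟨x, hx, rfl⟩ : ∃ x : ℝ, round x = 0 ∧ (x : UnitAddCircle) = x' :=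
    ⟨_, round_centeredRep x', coe_centeredRep x'⟩
  rw [skewMap_pow_apply α β hx] at h₁ h₂
  obtain ⟨hx₀, hz₀⟩ := h₀
  obtain ⟨hx₁, hz₁⟩ := h₁
  obtain ⟨hx₂, hz₂⟩ := h₂
  have coe_two_mul : x + (2 * n : ℕ) * α = x + 2 * (n * α) := by push_cast; ring
  rw [coe_two_mul] at hx₂ hz₂
  simp only [UnitAddCircle.norm_eq, hx, Int.cast_zero, sub_zero] at hx₀ hx₁ hx₂
  obtain ⟨round_add, round_add_two_mul⟩ := round_add_eq_round hx₀ hx₁ hx₂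
  rw [round_add] at hz₁
  rw [round_add_two_mul] at hz₂
  intro hn
  change 1 / 4 ≤ ‖(bracketPhase α β n : UnitAddCircle)‖ at hn
  rw [← second_difference_eq_bracketPhase α β x y z n] at hn
  have norm_le (z₀ z₁ z₂ : UnitAddCircle) : ‖z₂ - 2 • z₁ + z₀‖ ≤ ‖z₂‖ + 2 * ‖z₁‖ + ‖z₀‖ := by
    rw [two_nsmul]
    linarith [norm_add_le (z₂ - (z₁ + z₁)) z₀, norm_sub_le z₂ (z₁ + z₁), norm_add_le z₁ z₁]
  linarith [hn.trans (norm_le _ _ _)]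

theorem iInter_preimage_skewBox_eq_empty {α β : ℝ} {n : ℕ} (hn : n ∈ farPhaseSet α β) :
    ⋂ i ∈ Finset.range 3, (⇑((skewMap α β).toEquiv ^ ((i : ℤ) * (n : ℤ)))) ⁻¹' skewBox = ∅ := by
  refine Set.eq_empty_of_forall_notMem fun p hp => ?_
  have orbit_mem (i : ℕ) (hi : i < 3) : ((skewMap α β).toEquiv ^ (i * n)) p ∈ skewBox := by
    have := Set.mem_iInter₂.1 hp i (mem_range.2 hi)
    rwa [Set.mem_preimage, ← Nat.cast_mul, zpow_natCast] at this
  have h₀ := orbit_mem 0 (by norm_num)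
  have h₁ := orbit_mem 1 (by norm_num)
  rw [zero_mul, pow_zero] at h₀
  rw [one_mul] at h₁
  exact notMem_farPhaseSet_of_mem_skewBox h₀ h₁ (orbit_mem 2 (by norm_num)) hn

/-! ### The counterexample -/

lemma linearIndependent_one_sqrt_two_sqrt_three : LinearIndependent ℤ ![1, √2, √3] := by
  refine Fintype.linearIndependent_iff.2 fun g hg => ?_
  have h2 : Irrational √2 := irrational_sqrt_two
  have h3 : Irrational √3 := Nat.prime_three.irrational_sqrt
  have h6 : Irrational (√2 * √3) := by
    rw [← Real.sqrt_mul (by norm_num)]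
    norm_num
  have relation : g 0 + g 1 * √2 + g 2 * √3 = 0 := by simpa [Fin.sum_univ_three] using hg
  have sq_relation : 2 * g 1 * g 2 * (√2 * √3) = (g 0 ^ 2 - 2 * g 1 ^ 2 - 3 * g 2 ^ 2 : ℤ) := by
    have hs2 : √2 ^ 2 = 2 := Real.sq_sqrt (by norm_num)
    have hs3 : √3 ^ 2 = 3 := Real.sq_sqrt (by norm_num)
    push_cast
    linear_combination (g 1 * √2 + g 2 * √3 - g 0) * relation - g 1 ^ 2 * hs2 - g 2 ^ 2 * hs3
  have eq_zero {s : ℝ} (hs : Irrational s) {a b : ℤ} (h : a * s = b) : a = 0 := by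
    by_contra ha
    exact (hs.intCast_mul ha).ne_int b h
  have hprod : g 1 * g 2 = 0 := by
    have := eq_zero h6 (a := 2 * g 1 * g 2) (by exact_mod_cast sq_relation)
    linarith
  have h12 : g 1 = 0 ∧ g 2 = 0 := by
    rcases mul_eq_zero.1 hprod with h | h
    · exact ⟨h, eq_zero h3 (b := -g 0) (by simp [h] at relation; push_cast; linarith)⟩
    · exact ⟨eq_zero h2 (b := -g 0) (by simp [h] at relation; push_cast; linarith), h⟩
  have h0 : g 0 = 0 := by simpa [h12.1, h12.2] using relation
  intro i
  fin_cases i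
  exacts [h0, h12.1, h12.2]

theorem statement11 :
    ∃ r : ℕ → ℕ, StrictMono r ∧ (∀ n, 0 < r n) ∧
      (∀ γ δ : ℝ, (Irrational γ ∨ Irrational δ) → ∀ m : ℤ, m ≠ 0 →
        Tendsto (fun N : ℕ => (N : ℂ)⁻¹ *
            ∑ n ∈ Finset.range N, eFun ((m : ℝ) * ((r n : ℝ) ^ 2 * γ + (r n : ℝ) * δ)))
          atTop (nhds 0)) ∧
      (∀ d : ℕ, 0 < d → ∃ c : ℝ, 0 < c ∧
        Tendsto (fun N : ℕ =>
            (((Finset.range N).filter fun n => d ∣ r n).card : ℝ) / N)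
          atTop (nhds c)) ∧
      (∃ (X : Type) (_ : MeasurableSpace X) (μ : Measure X) (T : X ≃ᵐ X) (A : Set X),
        IsProbabilityMeasure μ ∧ MeasurePreserving (⇑T) μ μ ∧
        MeasurableSet A ∧ 0 < μ A ∧
        ∀ ρ : ℤ, ρ ∈ Set.range (fun n => (r n : ℤ)) → ρ ≠ 0 →
          μ (⋂ i ∈ Finset.range 3, (⇑(T.toEquiv ^ ((i : ℤ) * ρ))) ⁻¹' A) = 0) := by
  have hli := linearIndependent_one_sqrt_two_sqrt_three
  have hinf : {n | n ∈ farPhaseSet √2 √3}.Infinite := infinite_farPhaseSet hli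
  have hmem (n : ℕ) : Nat.nth (· ∈ farPhaseSet √2 √3) n ∈ farPhaseSet √2 √3 :=
    Nat.nth_mem_of_infinite hinf n
  refine ⟨Nat.nth (· ∈ farPhaseSet √2 √3), Nat.nth_strictMono hinf,
    fun n => pos_of_mem_farPhaseSet (hmem n), fun γ δ h m hm => ?_,
    fun d hd => ⟨(d : ℝ)⁻¹, by positivity, tendsto_density_dvd_nth_farPhaseSet hli hd.ne'⟩,
    SkewTorus, inferInstance, volume, skewMap √2 √3, skewBox, inferInstance,
    measurePreserving_skewMap √2 √3, isOpen_skewBox.measurableSet, volume_skewBox_pos, ?_⟩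
  · refine (hasMean_eFun_nth_farPhaseSet hli
      (h.imp (fun h => h.intCast_mul hm) fun h => h.intCast_mul hm)).congr fun N => ?_
    rw [cesaroMean_apply]
    congr! 3
    ring
  · rintro _ ⟨n, rfl⟩ -
    rw [iInter_preimage_skewBox_eq_empty (hmem n), measure_empty]
end

section
/- Let ℓ ∈ ℕ and let (u₁(n),…,u_ℓ(n))_{n∈ℕ} be a good sequence for multiple recurrence. Then for every ε > 0 there exist δ = δ(ε) > 0 and N₀ = N₀(ε) ∈ ℕ such that for every N ≥ N₀ and every set Λ of integers with Λ ⊆ {-N,…,N} and |Λ| ≥ εN, there exists n ∈ {1,…,N₀} with |Λ ∩ (Λ − u₁(n)) ∩ … ∩ (Λ − u_ℓ(n))| ≥ δN. -/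
open Filter MeasureTheory

/-- A sequence `(u₁(n), …, u_ℓ(n))` of `ℤ^ℓ`-valued data is a good sequence for multiple
recurrence if for every invertible measure preserving system and every measurable set `A`
of positive measure there is `n ∈ ℕ` with `μ(A ∩ T^{-u₁(n)}A ∩ … ∩ T^{-u_ℓ(n)}A) > 0`. -/
def GoodSeqForMultipleRecurrence (ℓ : ℕ) (u : Fin ℓ → ℕ → ℤ) : Prop :=
  ∀ (X : Type) (_ : MeasurableSpace X) (μ : Measure X),
    IsProbabilityMeasure μ →
    ∀ T : X ≃ᵐ X, MeasurePreserving (⇑T) μ μ →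
    ∀ A : Set X, MeasurableSet A → 0 < μ A →
      ∃ n : ℕ, 1 ≤ n ∧
        0 < μ (A ∩ ⋂ i : Fin ℓ, (⇑(T.toEquiv ^ (u i n))) ⁻¹' A)

/-!
If the conclusion fails for some `ε`, there are sets `Λₘ` of density bounded below in longer and
longer intervals such that, for every `n ≥ 1`, the density of
`Λₘ ∩ (Λₘ - u₁(n)) ∩ … ∩ (Λₘ - u_ℓ(n))` tends to `0`. Take an ultrafilter limit of the uniform
measures on long orbit segments, under the shift, of the indicator sequences of the `Λₘ`. The limit
is shift invariant because the two ends of a long orbit segment have vanishing weight. To the clopen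
set `A ∩ T^{-s₁}A ∩ … ∩ T^{-sₖ}A`, where `A = {x | x 0 = true}`, it assigns the limiting density of
`Λₘ ∩ (Λₘ - s₁) ∩ … ∩ (Λₘ - sₖ)`, so multiple recurrence in this one system is a contradiction.
-/

open scoped Topology ENNReal BoundedContinuousFunction
open SymbolicDynamics.FullShift

section OrbitMeasure

variable {X : Type*} [MeasurableSpace X] {T : X → X}

/-- The uniform measure on the orbit segment `x, T x, …, T^[n - 1] x`, counted with multiplicity;
its limit points as `n → ∞` are the invariant measures of the Krylov–Bogolyubov theorem. It is a
probability measure for `n ≠ 0`, and `0` for `n = 0`. -/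
noncomputable def orbitMeasure (T : X → X) (n : ℕ) (x : X) : Measure X :=
  (n : ℝ≥0∞)⁻¹ • ∑ k ∈ Finset.range n, Measure.dirac (T^[k] x)

instance (n : ℕ) [NeZero n] (x : X) : IsProbabilityMeasure (orbitMeasure T n x) where
  measure_univ := by
    simp [orbitMeasure, ENNReal.inv_mul_cancel (Nat.cast_ne_zero.mpr (NeZero.ne n))]

lemma integral_orbitMeasure {E : Type*} [NormedAddCommGroup E] [NormedSpace ℝ E] [CompleteSpace E]
    {f : X → E} (hf : StronglyMeasurable f) (n : ℕ) (x : X) :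
    ∫ z, f z ∂orbitMeasure T n x = birkhoffAverage ℝ T f n x := by
  rw [orbitMeasure, integral_smul_measure,
    integral_finsetSum_measure fun k _ => integrable_dirac' hf enorm_lt_top]
  simp only [integral_dirac' _ _ hf, ENNReal.toReal_inv, ENNReal.toReal_natCast]
  rfl

variable [TopologicalSpace X] [BorelSpace X] [HasOuterApproxClosed X]

lemma measurePreserving_of_tendsto_birkhoffAverage {ι : Type*} {F : Filter ι} [F.NeBot]
    (hT : Continuous T) {n : ι → ℕ} (hn : Tendsto n F atTop) {x : ι → X} {μ : Measure X}
    [IsFiniteMeasure μ]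
    (hμ : ∀ f : X →ᵇ ℝ,
      Tendsto (fun m => birkhoffAverage ℝ T f (n m) (x m)) F (𝓝 (∫ z, f z ∂μ))) :
    MeasurePreserving T μ μ := by
  refine ⟨hT.measurable, ext_of_forall_integral_eq_of_IsFiniteMeasure fun f => ?_⟩
  rw [integral_map hT.aemeasurable f.continuous.aestronglyMeasurable]
  have h_comp : Tendsto (fun m => birkhoffAverage ℝ T f (n m) (T (x m))) F
      (𝓝 (∫ z, f (T z) ∂μ)) := by
    refine (hμ (f.compContinuous ⟨T, hT⟩)).congr fun m => ?_
    simp only [birkhoffAverage, birkhoffSum, BoundedContinuousFunction.compContinuous_apply,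
      ContinuousMap.coe_mk, ← Function.iterate_succ_apply' T, Function.iterate_succ_apply T]
  refine tendsto_nhds_unique h_comp ((hμ f).congr_dist ?_)
  have h_zero : Tendsto (fun m => 2 * ‖f‖ / (n m : ℝ)) F (𝓝 0) :=
    (tendsto_const_nhds.div_atTop tendsto_natCast_atTop_atTop).comp hn
  refine squeeze_zero (fun _ => dist_nonneg) (fun m => ?_) h_zero
  rw [dist_comm, dist_birkhoffAverage_apply_birkhoffAverage]
  gcongr
  exact f.dist_le_two_norm _ _

/-- **Krylov–Bogolyubov**, along an ultrafilter and with varying starting points. -/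
theorem exists_measurePreserving_tendsto_birkhoffAverage [CompactSpace X] [T2Space X]
    {ι : Type*} {F : Ultrafilter ι} (hT : Continuous T) {n : ι → ℕ}
    (hn : Tendsto n F atTop) (x : ι → X) :
    ∃ μ : Measure X, IsProbabilityMeasure μ ∧ MeasurePreserving T μ μ ∧
      ∀ f : X →ᵇ ℝ, Tendsto (fun m => birkhoffAverage ℝ T f (n m) (x m)) F
        (𝓝 (∫ z, f z ∂μ)) := by
  have h_max_ne_zero (m : ι) : NeZero (max (n m) 1) := ⟨by lia⟩
  let ν (m : ι) : ProbabilityMeasure X := ⟨orbitMeasure T (max (n m) 1) (x m), inferInstance⟩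
  let μ : ProbabilityMeasure X := (F.map ν).lim
  have hν : Tendsto ν F (𝓝 μ) := (F.map ν).le_nhds_lim
  have hμ (f : X →ᵇ ℝ) :
      Tendsto (fun m => birkhoffAverage ℝ T f (n m) (x m)) F
        (𝓝 (∫ z, f z ∂(μ : Measure X))) := by
    refine (ProbabilityMeasure.tendsto_iff_forall_integral_tendsto.mp hν f).congr' ?_
    filter_upwards [hn.eventually_ge_atTop 1] with m hm
    simp only [ν, ProbabilityMeasure.coe_mk, max_eq_left hm]
    exact integral_orbitMeasure f.continuous.measurable.stronglyMeasurable (n m) (x m)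
  exact ⟨μ, inferInstance, measurePreserving_of_tendsto_birkhoffAverage hT hn hμ, hμ⟩

end OrbitMeasure

section Shift

variable {α G : Type*}

lemma shift_iterate [AddMonoid G] (g : G) (n : ℕ) :
    (shift g : (G → α) → G → α)^[n] = shift (n • g) := by
  induction n with
  | zero => ext x; simp
  | succ n ih =>
    ext x
    rw [Function.iterate_succ_apply', ih, succ_nsmul, shift_add]

variable [AddGroup G] [MeasurableSpace α]

variable (α) in
/-- The shift `shift g` by an element of a group, as a measurable automorphism of the space of
configurations. -/
def shiftEquiv (g : G) : (G → α) ≃ᵐ (G → α) where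
  toFun := shift g
  invFun := shift (-g)
  left_inv x := by rw [← shift_add, add_neg_cancel, shift_zero]
  right_inv x := by rw [← shift_add, neg_add_cancel, shift_zero]
  measurable_toFun := measurable_pi_lambda _ fun h => measurable_pi_apply (g + h)
  measurable_invFun := measurable_pi_lambda _ fun h => measurable_pi_apply (-g + h)

lemma shiftEquiv_zpow_apply (g : G) (k : ℤ) (x : G → α) :
    ((shiftEquiv α g).toEquiv ^ k) x = shift (k • g) x := by
  induction k using Int.induction_on generalizing x with
  | zero => simp
  | succ k ih =>
    rw [zpow_add_one, Equiv.Perm.mul_apply, ih, add_comm, one_add_zsmul, shift_add]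
    rfl
  | pred k ih =>
    rw [zpow_sub_one, Equiv.Perm.mul_apply, ih, sub_eq_neg_add, add_zsmul, neg_one_zsmul,
      shift_add]
    rfl

end Shift

section Correspondence

/-- The set `A ∩ ⋂ s ∈ S, T^{-s} A` of multiple returns to `A = {x | x 0 = true}` at the times
`s ∈ S`, for the shift `T` on two-sided binary sequences; `A` itself is `returnSet ∅`. -/
def returnSet (S : Finset ℤ) : Set (ℤ → Bool) :=
  {x | x 0 = true} ∩
    ⋂ s ∈ S, ⇑((shiftEquiv Bool (1 : ℤ)).toEquiv ^ s) ⁻¹' {x | x 0 = true}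

lemma mem_returnSet {S : Finset ℤ} {x : ℤ → Bool} :
    x ∈ returnSet S ↔ x 0 = true ∧ ∀ s ∈ S, x s = true := by
  simp [returnSet, shiftEquiv_zpow_apply]

lemma isClopen_returnSet (S : Finset ℤ) : IsClopen (returnSet S) := by
  have h_coord (j : ℤ) : IsClopen {x : ℤ → Bool | x j = true} :=
    (isClopen_discrete {true}).preimage (continuous_apply j)
  have h_eq : returnSet S = {x | x 0 = true} ∩ ⋂ s ∈ S, {x | x s = true} := by
    ext x
    simp [mem_returnSet]
  rw [h_eq]
  exact (h_coord 0).inter (isClopen_biInter_finset fun s _ => h_coord s)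

/-- The indicator sequence of `Λ`, with the origin moved to `a` so that the orbit segment of length
`n` reads off `Λ` on `[a, a + n)`. -/
def indicatorSeq (Λ : Finset ℤ) (a : ℤ) : ℤ → Bool := fun j => decide (a + j ∈ Λ)

lemma shift_iterate_indicatorSeq_mem_returnSet_iff {Λ S : Finset ℤ} {a : ℤ} {k : ℕ} :
    (shift (1 : ℤ))^[k] (indicatorSeq Λ a) ∈ returnSet S ↔
      a + k ∈ Λ.filter fun x => ∀ s ∈ S, x + s ∈ Λ := by
  simp [mem_returnSet, shift_iterate, indicatorSeq, add_assoc]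

lemma birkhoffAverage_indicator_returnSet {Λ : Finset ℤ} {a : ℤ} {n : ℕ}
    (hΛ : Λ ⊆ Finset.Ico a (a + n)) (S : Finset ℤ) :
    birkhoffAverage ℝ (shift (1 : ℤ)) ((returnSet S).indicator 1) n (indicatorSeq Λ a) =
      (Λ.filter fun x => ∀ s ∈ S, x + s ∈ Λ).card / (n : ℝ) := by
  classical
  set R := Λ.filter fun x => ∀ s ∈ S, x + s ∈ Λ with hR
  have hR_sub : R ⊆ Finset.Ico a (a + n) := (Finset.filter_subset _ _).trans hΛ
  calc birkhoffAverage ℝ (shift (1 : ℤ)) ((returnSet S).indicator 1) n (indicatorSeq Λ a)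
      = (∑ k ∈ Finset.range n, if a + k ∈ R then (1 : ℝ) else 0) / n := by
        simp only [birkhoffAverage, birkhoffSum, Set.indicator_apply,
          shift_iterate_indicatorSeq_mem_returnSet_iff, Pi.one_apply, smul_eq_mul, div_eq_inv_mul,
          hR]
    _ = (∑ j ∈ Finset.Ico a (a + n), if j ∈ R then (1 : ℝ) else 0) / n := by
        simp only [Int.Ico_eq_finset_map, Finset.sum_map, add_sub_cancel_left, Int.toNat_natCast]
        rfl
    _ = R.card / n := by
        rw [Finset.sum_boole, Finset.filter_mem_eq_inter, Finset.inter_eq_right.mpr hR_sub]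

/-- **Furstenberg correspondence principle**, along an ultrafilter. -/
theorem exists_measurePreserving_tendsto_card_div {ι : Type*} {F : Ultrafilter ι} {n : ι → ℕ}
    (hn : Tendsto n F atTop) {a : ι → ℤ} {Λ : ι → Finset ℤ}
    (hΛ : ∀ m, Λ m ⊆ Finset.Ico (a m) (a m + n m)) :
    ∃ μ : Measure (ℤ → Bool), IsProbabilityMeasure μ ∧
      MeasurePreserving (shiftEquiv Bool (1 : ℤ)) μ μ ∧
      ∀ S : Finset ℤ,
        Tendsto (fun m => (((Λ m).filter fun x => ∀ s ∈ S, x + s ∈ Λ m).card / n m : ℝ)) F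
          (𝓝 (μ.real (returnSet S))) := by
  obtain ⟨μ, hμ, hT, hlim⟩ := exists_measurePreserving_tendsto_birkhoffAverage
    (continuous_shift 1) hn fun m => indicatorSeq (Λ m) (a m)
  refine ⟨μ, hμ, hT, fun S => ?_⟩
  have hS := isClopen_returnSet S
  rw [← integral_indicator_one hS.isOpen.measurableSet]
  exact (hlim (.indicator _ hS)).congr fun m => birkhoffAverage_indicator_returnSet (hΛ m) S

theorem GoodSeqForMultipleRecurrence.exists_pos_eventually_le_card {ℓ : ℕ} {u : Fin ℓ → ℕ → ℤ}
    (hu : GoodSeqForMultipleRecurrence ℓ u) {ι : Type*} {F : Ultrafilter ι} {N : ι → ℕ}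
    (hN : Tendsto N F atTop) {a : ι → ℤ} {Λ : ι → Finset ℤ}
    (hΛ : ∀ m, Λ m ⊆ Finset.Ico (a m) (a m + N m)) {c : ℝ} (hc : 0 < c)
    (hcard : ∀ᶠ m in F, c * N m ≤ (Λ m).card) :
    ∃ n, 1 ≤ n ∧ ∃ δ : ℝ, 0 < δ ∧ ∀ᶠ m in F,
      δ * N m ≤ ((Λ m).filter fun x => ∀ i, x + u i n ∈ Λ m).card := by
  have hN_pos : ∀ᶠ m in F, (0 : ℝ) < N m :=
    (hN.eventually_gt_atTop 0).mono fun m hm => Nat.cast_pos.mpr hm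
  obtain ⟨μ, hμ, hT, hlim⟩ := exists_measurePreserving_tendsto_card_div hN hΛ
  have hA_pos : 0 < μ (returnSet ∅) := by
    have hc_le : c ≤ μ.real (returnSet ∅) := by
      refine ge_of_tendsto (hlim ∅) ?_
      filter_upwards [hcard, hN_pos] with m hm hm_pos
      simpa [le_div_iff₀ hm_pos] using hm
    exact (ENNReal.toReal_pos_iff.mp (hc.trans_le hc_le)).1
  obtain ⟨n, hn, hn_pos⟩ := hu _ _ μ hμ _ hT {x | x 0 = true}
    (by simpa [returnSet] using (isClopen_returnSet ∅).isOpen.measurableSet)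
    (by simpa [returnSet] using hA_pos)
  have h_returns : 0 < μ.real (returnSet (Finset.univ.image fun i => u i n)) :=
    ENNReal.toReal_pos (by simpa [returnSet] using hn_pos.ne') (measure_ne_top μ _)
  obtain ⟨δ, hδ, hδ_lt⟩ := exists_between h_returns
  refine ⟨n, hn, δ, hδ, ?_⟩
  filter_upwards [(hlim _).eventually_const_le hδ_lt, hN_pos] with m hm hm_pos
  simpa [le_div_iff₀ hm_pos] using hm

end Correspondence

theorem statement16 (ℓ : ℕ) (hℓ : 0 < ℓ) (u : Fin ℓ → ℕ → ℤ)
    (hu : GoodSeqForMultipleRecurrence ℓ u) :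
    ∀ ε : ℝ, 0 < ε → ∃ δ : ℝ, 0 < δ ∧ ∃ N₀ : ℕ, 0 < N₀ ∧
      ∀ N : ℕ, N₀ ≤ N → ∀ Λ : Finset ℤ,
        (∀ x ∈ Λ, -(N : ℤ) ≤ x ∧ x ≤ N) → ε * N ≤ Λ.card →
        ∃ n : ℕ, 1 ≤ n ∧ n ≤ N₀ ∧
          δ * N ≤ ((Λ.filter fun x => ∀ i : Fin ℓ, x + u i n ∈ Λ).card : ℝ) := by
  intro ε hε
  by_contra! hcon
  choose N hN Λ hΛ hcard hsmall using fun m : ℕ =>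
    hcon (1 / ((m : ℝ) + 1)) (by positivity) (m + 1) m.succ_pos
  have hN_one (m : ℕ) : (1 : ℝ) ≤ N m := by exact_mod_cast (Nat.le_add_left 1 m).trans (hN m)
  have hN_top : Tendsto (fun m => 2 * N m + 1) (hyperfilter ℕ) atTop :=
    (tendsto_atTop_mono (fun m => show m ≤ 2 * N m + 1 by linarith [hN m]) tendsto_id).mono_left
      Nat.hyperfilter_le_atTop
  have hΛ_Ico (m : ℕ) : Λ m ⊆ Finset.Ico (-(N m : ℤ)) (-N m + (2 * N m + 1 : ℕ)) := fun x hx =>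
    Finset.mem_Ico.mpr (by have := hΛ m x hx; lia)
  have hdensity (m : ℕ) : ε / 3 * (2 * N m + 1 : ℕ) ≤ (Λ m).card := by
    push_cast
    nlinarith [hcard m, hN_one m]
  obtain ⟨n, hn, δ, hδ, hreturn⟩ :=
    hu.exists_pos_eventually_le_card hN_top hΛ_Ico (by positivity) (.of_forall hdensity)
  have hlarge : ∀ᶠ m : ℕ in hyperfilter ℕ, n ≤ m ∧ 1 / ((m : ℝ) + 1) < δ :=
    Nat.hyperfilter_le_atTop ((eventually_ge_atTop n).and
      (tendsto_one_div_add_atTop_nhds_zero_nat.eventually_lt_const hδ))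
  obtain ⟨m, hm, hnm, hmδ⟩ := (hreturn.and hlarge).exists
  push_cast at hm
  nlinarith [hN_one m, hsmall m n hn (hnm.trans m.le_succ)]
end

section
/- Let ℓ ∈ ℕ and let (u₁(n),…,u_ℓ(n))_{n∈ℕ} be a good sequence for multiple recurrence. Then for every ε > 0 there exist γ = γ(ε) > 0 and N₁ = N₁(ε) ∈ ℕ such that for every system (X,ℬ,μ,T) and every A ∈ ℬ with μ(A) ≥ ε, there exists n ∈ {1,…,N₁} with μ(A ∩ T^{-u₁(n)}A ∩ … ∩ T^{-u_ℓ(n)}A) ≥ γ. -/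
/-!
Coding a point by its itinerary through `A` turns every system `(X, μ, T, A)` into a shift-invariant
probability measure on `{0,1}^ℤ`, in which `A` becomes the cylinder `{x | x 0 = 1}` and all measures
of multiple return sets are preserved. The invariant measures giving this cylinder mass at least `ε`
form a weakly compact set. On it the measure of each return set is a continuous function, because
return sets of the cylinder are clopen, and by goodness at every point one of these functions is
positive. By compactness finitely many of them suffice, with a uniform lower bound.
-/

open Filter MeasureTheory

open Function
open scoped ENNReal

theorem exists_finset_forall_exists_lt_of_isCompact {α J X : Type*} [TopologicalSpace X]
    [LinearOrder α] [DenselyOrdered α] {K : Set X} (hK : IsCompact K) {f : J → X → α}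
    (hf : ∀ j, LowerSemicontinuousOn (f j) K) {a b : α} (hab : a < b)
    (hlt : ∀ x ∈ K, ∃ j, a < f j x) :
    ∃ c ∈ Set.Ioo a b, ∃ t : Finset J, ∀ x ∈ K, ∃ j ∈ t, c < f j x := by
  classical
  refine hK.induction_on
    (p := fun s => ∃ c ∈ Set.Ioo a b, ∃ t : Finset J, ∀ x ∈ s, ∃ j ∈ t, c < f j x)
    ?empty ?mono ?union ?nhds
  case empty =>
    obtain ⟨c, hc⟩ := exists_between hab
    exact ⟨c, hc, ∅, by simp⟩
  case mono =>
    rintro s s' hss' ⟨c, hc, t, ht⟩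
    exact ⟨c, hc, t, fun x hx => ht x (hss' hx)⟩
  case union =>
    rintro s s' ⟨c, hc, t, ht⟩ ⟨c', hc', t', ht'⟩
    refine ⟨min c c', ⟨lt_min hc.1 hc'.1, min_lt_of_left_lt hc.2⟩, t ∪ t', ?_⟩
    rintro x (hx | hx)
    · obtain ⟨j, hj, hcj⟩ := ht x hx
      exact ⟨j, Finset.mem_union_left t' hj, min_lt_of_left_lt hcj⟩
    · obtain ⟨j, hj, hcj⟩ := ht' x hx
      exact ⟨j, Finset.mem_union_right t hj, min_lt_of_right_lt hcj⟩
  case nhds =>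
    intro x hx
    obtain ⟨j, hj⟩ := hlt x hx
    obtain ⟨c, hac, hc⟩ := exists_between (lt_min hab hj)
    exact ⟨{y | c < f j y}, hf j x hx c (hc.trans_le (min_le_right b _)), c,
      ⟨hac, hc.trans_le (min_le_left b _)⟩, {j}, fun y hy => ⟨j, Finset.mem_singleton_self j, hy⟩⟩

theorem continuous_toMeasure_apply_of_isClopen {X : Type*} [MeasurableSpace X]
    [TopologicalSpace X] [OpensMeasurableSpace X] [HasOuterApproxClosed X] {E : Set X}
    (hE : IsClopen E) : Continuous fun ν : ProbabilityMeasure X => (ν : Measure _) E := by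
  simp only [← ProbabilityMeasure.ennreal_coeFn_eq_coeFn_toMeasure]
  exact ENNReal.continuous_coe.comp <| continuous_iff_continuousAt.2 fun _ =>
    ProbabilityMeasure.tendsto_measure_of_isClopen_of_tendsto tendsto_id hE

theorem isClosed_setOfPred_measurePreserving {X : Type*} [MeasurableSpace X] [TopologicalSpace X]
    [BorelSpace X] [HasOuterApproxClosed X] {f : X → X} (hf : Continuous f) :
    IsClosed {ν : ProbabilityMeasure X | MeasurePreserving f (ν : Measure _) ν} := by
  have map_eq_iff (ν : ProbabilityMeasure X) :
      MeasurePreserving f (ν : Measure _) ν ↔ ν.map hf.measurable.aemeasurable = ν :=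
    ⟨fun h => Subtype.ext h.map_eq, fun h => ⟨hf.measurable, congrArg Subtype.val h⟩⟩
  simp only [map_eq_iff]
  exact isClosed_eq (ProbabilityMeasure.continuous_map hf) continuous_id

theorem continuous_toEquiv_zpow {X : Type*} [TopologicalSpace X] (T : X ≃ₜ X) :
    ∀ n : ℤ, Continuous (T.toEquiv ^ n)
  | .ofNat n => T.continuous.iterate n
  | .negSucc n => T.symm.continuous.iterate (n + 1)

theorem measurable_toEquiv_zpow {X : Type*} [MeasurableSpace X] (T : X ≃ᵐ X) :
    ∀ n : ℤ, Measurable (T.toEquiv ^ n)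
  | .ofNat n => T.measurable.iterate n
  | .negSucc n => T.symm.measurable.iterate (n + 1)

theorem semiconj_zpow {X Y : Type*} {φ : X → Y} {T : Equiv.Perm X} {S : Equiv.Perm Y}
    (h : Semiconj φ T S) : ∀ n : ℤ, Semiconj φ ⇑(T ^ n) ⇑(S ^ n)
  | .ofNat n => h.iterate_right n
  | .negSucc n => (h.inverses_right T.right_inv S.left_inv).iterate_right (n + 1)

/-- The multiple return set `A ∩ ⋂ᵢ T^{-vᵢ} A`: the points of `A` that lie in `A` at all the integer
times `vᵢ`. -/
def multipleReturnSet {X ι : Type*} (T : Equiv.Perm X) (A : Set X) (v : ι → ℤ) : Set X :=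
  A ∩ ⋂ i, (T ^ v i) ⁻¹' A

theorem preimage_multipleReturnSet {X Y ι : Type*} {φ : X → Y} {T : Equiv.Perm X}
    {S : Equiv.Perm Y} (h : Semiconj φ T S) (B : Set Y) (v : ι → ℤ) :
    φ ⁻¹' multipleReturnSet S B v = multipleReturnSet T (φ ⁻¹' B) v := by
  ext x
  simp only [multipleReturnSet, Set.mem_preimage, Set.mem_inter_iff, Set.mem_iInter,
    (semiconj_zpow h _).eq _]

theorem isClopen_multipleReturnSet {X ι : Type*} [TopologicalSpace X] [Finite ι] (T : X ≃ₜ X)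
    {A : Set X} (hA : IsClopen A) (v : ι → ℤ) : IsClopen (multipleReturnSet T.toEquiv A v) :=
  hA.inter (isClopen_iInter_of_finite fun i => hA.preimage (continuous_toEquiv_zpow T (v i)))

theorem exists_uniform_lt_measure_multipleReturnSet {X ι J : Type*} [TopologicalSpace X]
    [CompactSpace X] [T2Space X] [MeasurableSpace X] [BorelSpace X] [HasOuterApproxClosed X]
    [Finite ι] {T : X ≃ₜ X} {A : Set X} (hA : IsClopen A) {v : J → ι → ℤ}
    (hrec : ∀ ν : ProbabilityMeasure X, MeasurePreserving T (ν : Measure _) ν →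
      0 < (ν : Measure _) A → ∃ j, 0 < (ν : Measure _) (multipleReturnSet T.toEquiv A (v j)))
    {δ : ℝ≥0∞} (hδ : 0 < δ) :
    ∃ γ ∈ Set.Ioo 0 ∞, ∃ t : Finset J, ∀ ν : ProbabilityMeasure X,
      MeasurePreserving T (ν : Measure _) ν → δ ≤ (ν : Measure _) A →
        ∃ j ∈ t, γ < (ν : Measure _) (multipleReturnSet T.toEquiv A (v j)) := by
  have isCompact_invariant : IsCompact {ν : ProbabilityMeasure X |
      MeasurePreserving T (ν : Measure _) ν ∧ δ ≤ (ν : Measure _) A} :=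
    ((isClosed_setOfPred_measurePreserving T.continuous).inter
      (isClosed_le continuous_const (continuous_toMeasure_apply_of_isClopen hA))).isCompact
  obtain ⟨γ, hγ, t, ht⟩ := exists_finset_forall_exists_lt_of_isCompact isCompact_invariant
    (fun j => (continuous_toMeasure_apply_of_isClopen
      (isClopen_multipleReturnSet T hA (v j))).lowerSemicontinuous.lowerSemicontinuousOn _)
    ENNReal.zero_lt_top fun ν hν => hrec ν hν.1 (hδ.trans_le hν.2)
  exact ⟨γ, hγ, t, fun ν hinv hδν => ht ν ⟨hinv, hδν⟩⟩

/-- The left shift on two-sided sequences, a homeomorphism for the product topology. -/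
def shift (α : Type*) [TopologicalSpace α] : (ℤ → α) ≃ₜ (ℤ → α) where
  toFun x n := x (n + 1)
  invFun x n := x (n - 1)
  left_inv x := by simp only [sub_add_cancel]
  right_inv x := by simp only [add_sub_cancel_right]

/-- The cylinder of binary sequences with value `true` at time `0`; it plays the role of `A` in the
symbolic model. -/
def trueCylinder : Set (ℤ → Bool) := {x | x 0 = true}

theorem isClopen_trueCylinder : IsClopen trueCylinder :=
  (isClopen_discrete {true}).preimage (continuous_apply 0)

open Classical in
/-- The itinerary of a point: the two-sided binary sequence recording the times at which its orbit
visits `A`. -/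
noncomputable def itinerary {X : Type*} (T : Equiv.Perm X) (A : Set X) (x : X) : ℤ → Bool :=
  fun n => decide ((T ^ n) x ∈ A)

theorem semiconj_itinerary {X : Type*} (T : Equiv.Perm X) (A : Set X) :
    Semiconj (itinerary T A) T (shift Bool) := by
  intro x
  funext n
  change itinerary T A (T x) n = itinerary T A x (n + 1)
  have zpow_succ_apply : (T ^ (n + 1)) x = (T ^ n) (T x) := by
    rw [zpow_add_one, Equiv.Perm.mul_apply]
  rw [itinerary, itinerary, zpow_succ_apply]

theorem preimage_itinerary_trueCylinder {X : Type*} (T : Equiv.Perm X) (A : Set X) :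
    itinerary T A ⁻¹' trueCylinder = A := by
  ext x
  simp [itinerary, trueCylinder]

theorem measurable_itinerary {X : Type*} [MeasurableSpace X] (T : X ≃ᵐ X) {A : Set X}
    (hA : MeasurableSet A) : Measurable (itinerary T.toEquiv A) := by
  refine measurable_pi_lambda _ fun n => measurable_to_bool ?_
  simpa [itinerary, Set.preimage] using measurable_toEquiv_zpow T n hA

theorem exists_measurePreserving_shift_multipleReturnSet_eq {X ι : Type*} [MeasurableSpace X]
    [Finite ι] {μ : Measure X} [IsProbabilityMeasure μ] {T : X ≃ᵐ X} (hT : MeasurePreserving T μ μ)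
    {A : Set X} (hA : MeasurableSet A) :
    ∃ ν : ProbabilityMeasure (ℤ → Bool),
      MeasurePreserving (shift Bool) (ν : Measure _) ν ∧
      (ν : Measure _) trueCylinder = μ A ∧
      ∀ v : ι → ℤ, (ν : Measure _) (multipleReturnSet (shift Bool).toEquiv trueCylinder v) =
        μ (multipleReturnSet T.toEquiv A v) := by
  have hφ := measurable_itinerary T hA
  have hsemi := semiconj_itinerary T.toEquiv A
  refine ⟨⟨μ.map (itinerary T.toEquiv A), Measure.isProbabilityMeasure_map hφ.aemeasurable⟩,
    hφ.measurePreserving μ |>.of_semiconj hT hsemi (shift Bool).measurable, ?_, fun v => ?_⟩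
  · rw [ProbabilityMeasure.coe_mk, Measure.map_apply hφ isClopen_trueCylinder.isOpen.measurableSet,
      preimage_itinerary_trueCylinder]
  · rw [ProbabilityMeasure.coe_mk, Measure.map_apply hφ
      (isClopen_multipleReturnSet (shift Bool) isClopen_trueCylinder v).isOpen.measurableSet,
      preimage_multipleReturnSet hsemi, preimage_itinerary_trueCylinder]

theorem statement17_general {ι : Type*} [Finite ι] (u : ι → ℕ → ℤ)
    (hu : ∀ ν : ProbabilityMeasure (ℤ → Bool),
      MeasurePreserving (shift Bool) (ν : Measure _) ν →
      0 < (ν : Measure _) trueCylinder → ∃ n : ℕ, 1 ≤ n ∧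
        0 < (ν : Measure _)
          (multipleReturnSet (shift Bool).toEquiv trueCylinder fun i => u i n)) :
    ∀ ε : ℝ, 0 < ε → ∃ γ : ℝ, 0 < γ ∧ ∃ N₁ : ℕ, 0 < N₁ ∧
      ∀ (X : Type*) (_ : MeasurableSpace X) (μ : Measure X),
        IsProbabilityMeasure μ →
        ∀ T : X ≃ᵐ X, MeasurePreserving T μ μ →
        ∀ A : Set X, MeasurableSet A → ENNReal.ofReal ε ≤ μ A →
          ∃ n : ℕ, 1 ≤ n ∧ n ≤ N₁ ∧
            ENNReal.ofReal γ ≤ μ (multipleReturnSet T.toEquiv A fun i => u i n) := by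
  intro ε hε
  obtain ⟨γ, ⟨hγ, hγ_top⟩, t, ht⟩ := exists_uniform_lt_measure_multipleReturnSet
    (J := ℕ+) (v := fun n i => u i n) isClopen_trueCylinder
    (fun ν hinv hν => let ⟨n, hn, hpos⟩ := hu ν hinv hν; ⟨⟨n, hn⟩, hpos⟩)
    (ENNReal.ofReal_pos.2 hε)
  refine ⟨γ.toReal, ENNReal.toReal_pos hγ.ne' hγ_top.ne, (t.sup id : ℕ+), PNat.pos _, ?_⟩
  intro X _ μ _ T hT A hA hεA
  obtain ⟨ν, hinv, hνA, hνreturn⟩ :=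
    exists_measurePreserving_shift_multipleReturnSet_eq (ι := ι) hT hA
  obtain ⟨n, hn, hγn⟩ := ht ν hinv (hεA.trans_eq hνA.symm)
  refine ⟨n, n.pos, PNat.coe_le_coe _ _ |>.2 (Finset.le_sup (f := id) hn), ?_⟩
  rw [ENNReal.ofReal_toReal hγ_top.ne, ← hνreturn]
  exact hγn.le

theorem statement17 (ℓ : ℕ) (hℓ : 0 < ℓ) (u : Fin ℓ → ℕ → ℤ)
    (hu : GoodSeqForMultipleRecurrence ℓ u) :
    ∀ ε : ℝ, 0 < ε → ∃ γ : ℝ, 0 < γ ∧ ∃ N₁ : ℕ, 0 < N₁ ∧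
      ∀ (X : Type) (_ : MeasurableSpace X) (μ : Measure X),
        IsProbabilityMeasure μ →
        ∀ T : X ≃ᵐ X, MeasurePreserving (⇑T) μ μ →
        ∀ A : Set X, MeasurableSet A → ENNReal.ofReal ε ≤ μ A →
          ∃ n : ℕ, 1 ≤ n ∧ n ≤ N₁ ∧
            ENNReal.ofReal γ ≤
              μ (A ∩ ⋂ i : Fin ℓ, (⇑(T.toEquiv ^ (u i n))) ⁻¹' A) := by
  exact statement17_general u fun ν hinv hν => hu (ℤ → Bool) _ ν inferInstance
    (shift Bool).toMeasurableEquiv hinv trueCylinder isClopen_trueCylinder.isOpen.measurableSet hν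
end
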